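/- arXiv:2605.19349 — 11 statements merged into one kernel-verified Lean document; each statement's English description precedes it below -/
import Mathlib

section
/- Let A be a GLD-lattice and let x, y ∈ A with x ≰ y. Then there exists a natural number n such that x ⊓ □ⁿ⊥ ≰ y ⊔ ◇ⁿ⊤ (where □ⁿ and ◇ⁿ denote n-fold iteration of □ and ◇). -/
/-!
By the two approximation axioms, applied one after the other, `x ≰ y` yields first an `m` with
`x ⊓ □ᵐ⊥ ≰ y` and then a `k` with `x ⊓ □ᵐ⊥ ≰ y ⊔ ◇ᵏ⊤`. Since `□` and `◇` are monotone, `□ⁿ⊥`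
increases and `◇ⁿ⊤` decreases with `n`, so `n = max m k` works.
-/

/-- A GLD-lattice structure on a bounded distributive lattice `A`, given by the
modal operations `box` and `dia`. -/
structure IsGLDLattice {A : Type*} [DistribLattice A] [BoundedOrder A]
    (box dia : A → A) : Prop where
  box_top : box ⊤ = ⊤
  dia_bot : dia ⊥ = ⊥
  box_sup_le : ∀ x y : A, box (x ⊔ y) ≤ box x ⊔ dia y
  inf_dia_le : ∀ x y : A, box x ⊓ dia y ≤ dia (x ⊓ y)
  dia_sup : ∀ x y : A, dia (x ⊔ y) = dia x ⊔ dia y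
  box_inf : ∀ x y : A, box (x ⊓ y) = box x ⊓ box y
  dia_dia_le : ∀ x : A, dia (dia x) ≤ dia x
  box_le_box_box : ∀ x : A, box x ≤ box (box x)
  isLUB_inf_boxIter : ∀ x : A, IsLUB {y : A | ∃ n : ℕ, y = x ⊓ box^[n] ⊥} x
  isGLB_sup_diaIter : ∀ x : A, IsGLB {y : A | ∃ n : ℕ, y = x ⊔ dia^[n] ⊤} x

/-- If `A` is a GLD-lattice and `x ≰ y`, then there is `n ∈ ℕ` with
`x ⊓ □ⁿ⊥ ≰ y ⊔ ◇ⁿ⊤`. -/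
theorem stmt0 {A : Type*} [DistribLattice A] [BoundedOrder A] (box dia : A → A)
    (h : IsGLDLattice box dia) (x y : A) (hxy : ¬ x ≤ y) :
    ∃ n : ℕ, ¬ (x ⊓ box^[n] ⊥ ≤ y ⊔ dia^[n] ⊤) := by
  have box_mono : Monotone box := fun a b hab => by
    rw [← inf_eq_left.mpr hab, h.box_inf]
    exact inf_le_right
  have dia_mono : Monotone dia := fun a b hab => by
    rw [← sup_eq_right.mpr hab, h.dia_sup]
    exact le_sup_left
  by_contra! hall
  apply hxy
  refine (isLUB_le_iff (h.isLUB_inf_boxIter x)).mpr ?_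
  rintro _ ⟨m, rfl⟩
  refine (le_isGLB_iff (h.isGLB_sup_diaIter y)).mpr ?_
  rintro _ ⟨k, rfl⟩
  calc x ⊓ box^[m] ⊥ ≤ x ⊓ box^[max m k] ⊥ :=
        inf_le_inf_left x (box_mono.monotone_iterate_of_le_map bot_le (le_max_left m k))
    _ ≤ y ⊔ dia^[max m k] ⊤ := hall _
    _ ≤ y ⊔ dia^[k] ⊤ :=
        sup_le_sup_left (dia_mono.antitone_iterate_of_map_le le_top (le_max_right m k)) y
end

section
/- Let A be a GLD-lattice and let x, y ∈ A with x ≰ y. Then there exists a GLD-filter F of A such that x ∈ F and y ∉ F. -/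
/-- A GLD-filter of `A`: a prime filter `F` such that for some `n`,
`◇ⁿ⊤ ∉ F` and `□ⁿ⊥ ∈ F`. -/
structure IsGLDFilter {A : Type*} [DistribLattice A] [BoundedOrder A]
    (box dia : A → A) (F : Set A) : Prop where
  nonempty : F.Nonempty
  mem_of_le : ∀ x y : A, x ∈ F → x ≤ y → y ∈ F
  inf_mem : ∀ x y : A, x ∈ F → y ∈ F → x ⊓ y ∈ F
  bot_not_mem : ⊥ ∉ F
  prime : ∀ x y : A, x ⊔ y ∈ F → x ∈ F ∨ y ∈ F
  gld : ∃ n : ℕ, dia^[n] ⊤ ∉ F ∧ box^[n] ⊥ ∈ F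

/-- The prime filter theorem: in a distributive lattice, `a ≰ b` is witnessed by a prime ideal
containing `b` but not `a`; its complement is the prime filter of interest. -/
theorem exists_prime_ideal_of_not_le {A : Type*} [DistribLattice A] [BoundedOrder A] {a b : A}
    (hab : ¬ a ≤ b) : ∃ J : Order.Ideal A, J.IsPrime ∧ b ∈ J ∧ a ∉ J := by
  have hdisj : Disjoint (Order.PFilter.principal a : Set A) (Order.Ideal.principal b : Set A) := by
    rw [Set.disjoint_left]
    intro z hz hz'
    exact hab (le_trans (Order.PFilter.mem_principal.1 hz) (Order.Ideal.mem_principal.1 hz'))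
  obtain ⟨J, hJ, hbJ, haJ⟩ := DistribLattice.prime_ideal_of_disjoint_filter_ideal hdisj
  exact ⟨J, hJ, hbJ (Order.Ideal.mem_principal.2 le_rfl),
    fun ha => Set.disjoint_left.1 haJ (Order.PFilter.mem_principal.2 le_rfl) ha⟩

/-- If `A` is a GLD-lattice and `x ≰ y`, then there is a GLD-filter `F` of `A`
with `x ∈ F` and `y ∉ F`. -/
theorem stmt1 {A : Type*} [DistribLattice A] [BoundedOrder A] (box dia : A → A)
    (h : IsGLDLattice box dia) (x y : A) (hxy : ¬ x ≤ y) :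
    ∃ F : Set A, IsGLDFilter box dia F ∧ x ∈ F ∧ y ∉ F := by
  obtain ⟨n, hn⟩ : ∃ n : ℕ, ¬ x ⊓ box^[n] ⊥ ≤ y := by
    by_contra! hall
    refine hxy ((h.isLUB_inf_boxIter x).2 ?_)
    rintro _ ⟨n, rfl⟩
    exact hall n
  obtain ⟨m, hm⟩ : ∃ m : ℕ, ¬ x ⊓ box^[n] ⊥ ≤ y ⊔ dia^[m] ⊤ := by
    by_contra! hall
    refine hn ((h.isGLB_sup_diaIter y).2 ?_)
    rintro _ ⟨m, rfl⟩
    exact hall m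
  have box_mono : Monotone box := fun a b hab => by
    rw [← inf_eq_left, ← h.box_inf, inf_eq_left.2 hab]
  have dia_mono : Monotone dia := fun a b hab => by
    rw [← sup_eq_right, ← h.dia_sup, sup_eq_right.2 hab]
  have boxIter_mono : Monotone fun k : ℕ => box^[k] ⊥ :=
    box_mono.monotone_iterate_of_le_map bot_le
  have diaIter_anti : Antitone fun k : ℕ => dia^[k] ⊤ :=
    dia_mono.antitone_iterate_of_map_le le_top
  obtain ⟨J, hJ, hbJ, haJ⟩ := exists_prime_ideal_of_not_le hm
  have hxJ : x ∉ J := fun hx => haJ (J.lower inf_le_left hx)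
  refine ⟨(J : Set A)ᶜ, ?_, hxJ, fun hy => hy (J.lower le_sup_left hbJ)⟩
  exact
    { nonempty := ⟨x, hxJ⟩
      mem_of_le := fun a b ha hab hb => ha (J.lower hab hb)
      inf_mem := fun a b ha hb hab => (hJ.mem_or_mem hab).elim ha hb
      bot_not_mem := fun hbot => hbot J.bot_mem
      prime := fun a b hab => by
        by_contra! hcon
        exact hab (Order.Ideal.sup_mem (not_not.1 hcon.1) (not_not.1 hcon.2))
      gld := ⟨max n m,
        fun hd => hd (J.lower ((diaIter_anti (le_max_right n m)).trans le_sup_right) hbJ),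
        fun hb => haJ (J.lower (inf_le_right.trans (boxIter_mono (le_max_left n m))) hb)⟩ }
end

section
/- Every GLD-algebra is a GL-algebra; that is, if A is a GLD-algebra, then □(□x → x) ≤ □x holds for every x ∈ A. -/
/-!
Writing `a = □(□x → x)`, induction on `n` gives `□ⁿ⊥ ⊓ a ≤ □x`: since `a ≤ □a`,
`□ⁿ⁺¹⊥ ⊓ a ≤ □(□ⁿ⊥ ⊓ a ⊓ (□x → x)) ≤ □(□x ⊓ (□x → x)) ≤ □x`. As `⊤` is the supremum of
the `□ⁿ⊥`, residuation yields `a ≤ □x`.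
-/

/-- A GLD-algebra structure on a Boolean algebra `A`, given by the modal
operation `box`. -/
structure IsGLDAlgebra {A : Type*} [BooleanAlgebra A] (box : A → A) : Prop where
  box_top : box ⊤ = ⊤
  box_inf : ∀ x y : A, box (x ⊓ y) = box x ⊓ box y
  box_le_box_box : ∀ x : A, box x ≤ box (box x)
  isLUB_boxIter : IsLUB {y : A | ∃ n : ℕ, y = box^[n] ⊥} ⊤

/-- Every GLD-algebra is a GL-algebra: `□(□x → x) ≤ □x` holds for all `x`,
where `u → v` is `uᶜ ⊔ v`. -/
theorem stmt2 {A : Type*} [BooleanAlgebra A] (box : A → A)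
    (h : IsGLDAlgebra box) :
    ∀ x : A, box ((box x)ᶜ ⊔ x) ≤ box x := by
  intro x
  have mono : ∀ u v : A, u ≤ v → box u ≤ box v := fun u v huv => by
    rw [← inf_eq_left, ← h.box_inf, inf_eq_left.2 huv]
  have key : ∀ n : ℕ, box^[n] ⊥ ⊓ box ((box x)ᶜ ⊔ x) ≤ box x := by
    intro n
    induction n with
    | zero => simp
    | succ n ih =>
      rw [Function.iterate_succ_apply']
      calc box (box^[n] ⊥) ⊓ box ((box x)ᶜ ⊔ x)
          ≤ box (box^[n] ⊥) ⊓ (box (box ((box x)ᶜ ⊔ x)) ⊓ box ((box x)ᶜ ⊔ x)) :=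
            inf_le_inf_left _ (le_inf (h.box_le_box_box _) le_rfl)
        _ = box ((box^[n] ⊥ ⊓ box ((box x)ᶜ ⊔ x)) ⊓ ((box x)ᶜ ⊔ x)) := by
            rw [h.box_inf, h.box_inf, inf_assoc]
        _ ≤ box (box x ⊓ ((box x)ᶜ ⊔ x)) := mono _ _ (inf_le_inf_right _ ih)
        _ ≤ box x := mono _ _ (by rw [inf_sup_left, inf_compl_self, bot_sup_eq]; exact inf_le_right)
  -- By residuation each `□ⁿ⊥` lies below `□(□x → x) → □x`, hence so does their supremum `⊤`.
  have top_le : ⊤ ≤ box ((box x)ᶜ ⊔ x) ⇨ box x := by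
    refine h.isLUB_boxIter.2 ?_
    rintro _ ⟨n, rfl⟩
    exact le_himp_iff.2 (key n)
  simpa using le_himp_iff.1 top_le
end

section
/- Let A be a GLD-lattice and let N be a GLD-filter frame of A. Then the map η from A to the powerset of the set of GLD-filters of A, given by η(x) = {F : F is a GLD-filter of A and x ∈ F}, is injective and satisfies: η(⊥) = ∅, η(⊤) = the set of all GLD-filters, η(x ⊔ y) = η(x) ∪ η(y), η(x ⊓ y) = η(x) ∩ η(y), η(□x) = □_Z η(x), and η(◇x) = ◇_Z η(x) for all x, y ∈ A. -/
/-- The type of GLD-filters of `A`. -/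
def GLDFilter (A : Type*) [DistribLattice A] [BoundedOrder A] (box dia : A → A) :=
  {F : Set A // IsGLDFilter box dia F}

/-- `eta x` is the set of GLD-filters containing `x`. -/
def eta {A : Type*} [DistribLattice A] [BoundedOrder A] (box dia : A → A)
    (x : A) : Set (GLDFilter A box dia) :=
  {F | x ∈ F.1}

/-- A GLD-filter frame of `A`: each `N F` is a filter of the powerset of the
set of GLD-filters, and the neighborhood conditions relating `N` to `box`,
`dia` and `eta` hold. -/
structure IsGLDFilterFrame {A : Type*} [DistribLattice A] [BoundedOrder A]
    (box dia : A → A)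
    (N : GLDFilter A box dia → Set (Set (GLDFilter A box dia))) : Prop where
  nonempty : ∀ F, (N F).Nonempty
  mem_of_subset : ∀ F, ∀ X Y : Set (GLDFilter A box dia),
    X ∈ N F → X ⊆ Y → Y ∈ N F
  inter_mem : ∀ F, ∀ X Y : Set (GLDFilter A box dia),
    X ∈ N F → Y ∈ N F → X ∩ Y ∈ N F
  eta_mem : ∀ F x, box x ∈ F.1 → eta box dia x ∈ N F
  compl_eta_mem : ∀ F x, dia x ∉ F.1 → (eta box dia x)ᶜ ∈ N F
  eta_not_mem : ∀ F x, box x ∉ F.1 → eta box dia x ∉ N F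
  compl_eta_not_mem : ∀ F x, dia x ∈ F.1 → (eta box dia x)ᶜ ∉ N F

/-- The box operator on the powerset of the set of GLD-filters induced by a
neighborhood map `N`. -/
def boxZ {A : Type*} [DistribLattice A] [BoundedOrder A] (box dia : A → A)
    (N : GLDFilter A box dia → Set (Set (GLDFilter A box dia))) :
    Set (GLDFilter A box dia) → Set (GLDFilter A box dia) :=
  fun X => {F | X ∈ N F}

/-- The diamond operator induced by a neighborhood map `N`. -/
def diaZ {A : Type*} [DistribLattice A] [BoundedOrder A] (box dia : A → A)
    (N : GLDFilter A box dia → Set (Set (GLDFilter A box dia))) :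
    Set (GLDFilter A box dia) → Set (GLDFilter A box dia) :=
  fun X => (boxZ box dia N Xᶜ)ᶜ

/-- The canonical neighborhood map of a GLD-lattice. -/
def canonN {A : Type*} [DistribLattice A] [BoundedOrder A] (box dia : A → A)
    (F : GLDFilter A box dia) : Set (Set (GLDFilter A box dia)) :=
  {X | ∃ x y : A, box x ∈ F.1 ∧ dia y ∉ F.1 ∧
    eta box dia x ∩ (eta box dia y)ᶜ ⊆ X}

/-- Prime filter theorem for GLD-filters: the two approximation axioms make it
possible to choose the separating prime filter to be a GLD-filter. -/
lemma exists_gldFilter_of_not_le {A : Type*} [DistribLattice A] [BoundedOrder A]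
    {box dia : A → A} (h : IsGLDLattice box dia) {x y : A} (hxy : ¬ x ≤ y) :
    ∃ F : GLDFilter A box dia, x ∈ F.1 ∧ y ∉ F.1 := by
  obtain ⟨n, hn⟩ : ∃ n : ℕ, ¬ x ⊓ box^[n] ⊥ ≤ y := by
    by_contra! hc
    exact hxy ((h.isLUB_inf_boxIter x).2 (by rintro _ ⟨n, rfl⟩; exact hc n))
  obtain ⟨m, hm⟩ : ∃ m : ℕ, ¬ x ⊓ box^[n] ⊥ ≤ y ⊔ dia^[m] ⊤ := by
    by_contra! hc
    exact hn ((h.isGLB_sup_diaIter y).2 (by rintro _ ⟨m, rfl⟩; exact hc m))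
  have hbox : Monotone box := fun a b hab => by
    rw [← inf_eq_left] at hab ⊢
    rw [← h.box_inf, hab]
  have hdia : Monotone dia := fun a b hab => by
    rw [← sup_eq_right] at hab ⊢
    rw [← h.dia_sup, hab]
  have hdisj : Disjoint (Order.PFilter.principal (x ⊓ box^[n] ⊥) : Set A)
      (Order.Ideal.principal (y ⊔ dia^[m] ⊤) : Set A) := by
    rw [Set.disjoint_left]
    intro a ha hb
    exact hm ((Order.PFilter.mem_principal.1 ha).trans (Order.Ideal.mem_principal.1 hb))
  obtain ⟨J, hJ, hIJ, hFJ⟩ := DistribLattice.prime_ideal_of_disjoint_filter_ideal hdisj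
  have hx : x ⊓ box^[n] ⊥ ∉ J :=
    Set.disjoint_left.1 hFJ (Order.PFilter.mem_principal.2 le_rfl)
  have hy : y ⊔ dia^[m] ⊤ ∈ J := hIJ (Order.Ideal.mem_principal.2 le_rfl)
  refine ⟨⟨{a | a ∉ J}, ?_⟩, fun ha => hx (J.lower inf_le_left ha),
    fun hc => hc (J.lower le_sup_left hy)⟩
  refine ⟨⟨_, hx⟩, fun a b ha hab hb => ha (J.lower hab hb), ?_, fun hc => hc J.bot_mem,
    ?_, max n m, ?_, ?_⟩
  · intro a b ha hb hab
    exact (hJ.mem_or_mem hab).elim ha hb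
  · intro a b hab
    by_contra! hc
    simp only [Set.mem_ofPred_eq, not_not] at hc
    exact hab (J.sup_mem hc.1 hc.2)
  -- `◇ᵏ⊤` decreases and `□ᵏ⊥` increases with `k`, so both conditions persist at `max n m`.
  · exact fun hc => hc (J.lower
      ((hdia.antitone_iterate_of_map_le le_top (le_max_right n m)).trans le_sup_right) hy)
  · exact fun hc => hx (J.lower
      (inf_le_right.trans (hbox.monotone_iterate_of_le_map bot_le (le_max_left n m))) hc)

/-- For a GLD-lattice `A` and a GLD-filter frame `N` of `A`, the map `eta` is
an injective homomorphism of modal distributive lattices into the dual algebra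
of the frame. -/
theorem stmt3 {A : Type*} [DistribLattice A] [BoundedOrder A] (box dia : A → A)
    (h : IsGLDLattice box dia)
    (N : GLDFilter A box dia → Set (Set (GLDFilter A box dia)))
    (hN : IsGLDFilterFrame box dia N) :
    Function.Injective (eta box dia) ∧
    eta box dia (⊥ : A) = ∅ ∧
    eta box dia (⊤ : A) = Set.univ ∧
    (∀ x y : A, eta box dia (x ⊔ y) = eta box dia x ∪ eta box dia y) ∧
    (∀ x y : A, eta box dia (x ⊓ y) = eta box dia x ∩ eta box dia y) ∧
    (∀ x : A, eta box dia (box x) = boxZ box dia N (eta box dia x)) ∧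
    (∀ x : A, eta box dia (dia x) = diaZ box dia N (eta box dia x)) := by
  have hle : ∀ x y : A, eta box dia x ⊆ eta box dia y → x ≤ y := by
    intro x y hs
    by_contra hxy
    obtain ⟨F, hx, hy⟩ := exists_gldFilter_of_not_le h hxy
    exact hy (hs hx)
  refine ⟨fun x y he => le_antisymm (hle x y he.subset) (hle y x he.superset), ?_, ?_, ?_, ?_,
    ?_, ?_⟩
  · ext F
    exact ⟨fun hF => F.2.bot_not_mem hF, fun hF => hF.elim⟩
  · ext F
    obtain ⟨a, ha⟩ := F.2.nonempty
    exact ⟨fun _ => trivial, fun _ => F.2.mem_of_le a ⊤ ha le_top⟩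
  · intro x y
    ext F
    exact ⟨F.2.prime x y, fun hF => hF.elim (fun hx => F.2.mem_of_le x _ hx le_sup_left)
      fun hy => F.2.mem_of_le y _ hy le_sup_right⟩
  · intro x y
    ext F
    exact ⟨fun hF => ⟨F.2.mem_of_le _ x hF inf_le_left, F.2.mem_of_le _ y hF inf_le_right⟩,
      fun hF => F.2.inf_mem x y hF.1 hF.2⟩
  · intro x
    ext F
    exact ⟨hN.eta_mem F x, fun hF => not_not.1 fun hc => hN.eta_not_mem F x hc hF⟩
  · intro x
    ext F
    exact ⟨hN.compl_eta_not_mem F x, fun hF => not_not.1 fun hc => hF (hN.compl_eta_mem F x hc)⟩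
end

section
/- Let A be a GLD-lattice and, for each GLD-filter F of A, let N(F) be the collection of all sets X of GLD-filters such that η(x) ∩ (η(y))ᶜ ⊆ X for some x, y ∈ A with □x ∈ F and ◇y ∉ F. Then each N(F) is a filter of the powerset of the set of GLD-filters of A: it is nonempty, upward closed under ⊆, and closed under binary intersections. -/
/-- For a GLD-lattice `A`, each `canonN F` is a filter of the powerset of the
set of GLD-filters: nonempty, upward closed under `⊆`, and closed under binary
intersections. -/
theorem stmt4 {A : Type*} [DistribLattice A] [BoundedOrder A] (box dia : A → A)
    (h : IsGLDLattice box dia) (F : GLDFilter A box dia) :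
    (canonN box dia F).Nonempty ∧
    (∀ X Y : Set (GLDFilter A box dia),
      X ∈ canonN box dia F → X ⊆ Y → Y ∈ canonN box dia F) ∧
    (∀ X Y : Set (GLDFilter A box dia),
      X ∈ canonN box dia F → Y ∈ canonN box dia F →
        X ∩ Y ∈ canonN box dia F) := by
  refine ⟨⟨Set.univ, ⊤, ⊥, ?_, ?_, Set.subset_univ _⟩, ?_, ?_⟩
  · obtain ⟨a, ha⟩ := F.2.nonempty
    rw [h.box_top]
    exact F.2.mem_of_le a ⊤ ha le_top
  · rw [h.dia_bot]
    exact F.2.bot_not_mem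
  · rintro X Y ⟨x, y, hx, hy, hX⟩ hXY
    exact ⟨x, y, hx, hy, hX.trans hXY⟩
  · rintro X Y ⟨x, y, hx, hy, hX⟩ ⟨x', y', hx', hy', hY⟩
    refine ⟨x ⊓ x', y ⊔ y', ?_, ?_, ?_⟩
    · rw [h.box_inf]
      exact F.2.inf_mem _ _ hx hx'
    · rw [h.dia_sup]
      exact fun hmem => (F.2.prime _ _ hmem).elim hy hy'
    · rintro G ⟨hG, hG'⟩
      exact ⟨hX ⟨G.2.mem_of_le _ _ hG inf_le_left,
          fun hGy => hG' (G.2.mem_of_le _ _ hGy le_sup_left)⟩,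
        hY ⟨G.2.mem_of_le _ _ hG inf_le_right,
          fun hGy => hG' (G.2.mem_of_le _ _ hGy le_sup_right)⟩⟩
end

section
/- Let A be a GLD-lattice and, for each GLD-filter F of A, let N(F) be the collection of all sets X of GLD-filters such that η(x) ∩ (η(y))ᶜ ⊆ X for some x, y ∈ A with □x ∈ F and ◇y ∉ F. Then N is a GLD-filter frame of A; in particular: (1) η(x) ∈ N(F) whenever □x ∈ F, and (η(x))ᶜ ∈ N(F) whenever ◇x ∉ F; and (2) if □x ∉ F then η(x) ∉ N(F), and if ◇x ∈ F then (η(x))ᶜ ∉ N(F). -/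
theorem IsGLDLattice.box_mono {A : Type*} [DistribLattice A] [BoundedOrder A]
    {box dia : A → A} (h : IsGLDLattice box dia) : Monotone box := by
  intro x y hxy
  rw [← inf_eq_left.2 hxy, h.box_inf]
  exact inf_le_right

theorem IsGLDLattice.dia_mono {A : Type*} [DistribLattice A] [BoundedOrder A]
    {box dia : A → A} (h : IsGLDLattice box dia) : Monotone dia := by
  intro x y hxy
  rw [← sup_eq_right.2 hxy, h.dia_sup]
  exact le_sup_left

/-- GLD-filters separate points: the approximation axioms reduce `¬ a ≤ c` to
`¬ a ⊓ □ⁿ⊥ ≤ c ⊔ ◇ᵐ⊤` for some `n`, `m`, and any prime filter separating the latter two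
elements is a GLD-filter. -/
theorem le_of_forall_gldFilter {A : Type*} [DistribLattice A] [BoundedOrder A]
    {box dia : A → A} (h : IsGLDLattice box dia) {a c : A}
    (hac : ∀ G : GLDFilter A box dia, a ∈ G.1 → c ∈ G.1) : a ≤ c := by
  refine (h.isLUB_inf_boxIter a).2 ?_
  rintro _ ⟨n, rfl⟩
  refine (h.isGLB_sup_diaIter c).2 ?_
  rintro _ ⟨m, rfl⟩
  by_contra hnot
  have hdisj : Disjoint (Order.PFilter.principal (a ⊓ box^[n] ⊥) : Set A)
      (Order.Ideal.principal (c ⊔ dia^[m] ⊤) : Set A) := by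
    rw [Set.disjoint_left]
    intro z hz hz'
    exact hnot (le_trans (Order.PFilter.mem_principal.1 hz) (Order.Ideal.mem_principal.1 hz'))
  obtain ⟨J, hJ, hIJ, hFJ⟩ := DistribLattice.prime_ideal_of_disjoint_filter_ideal hdisj
  have hin : a ⊓ box^[n] ⊥ ∉ J := fun hz =>
    Set.disjoint_left.1 hFJ (Order.PFilter.mem_principal.2 le_rfl) hz
  have hout : c ⊔ dia^[m] ⊤ ∈ J := hIJ (Order.Ideal.mem_principal.2 le_rfl)
  -- The two exponents are replaced by their maximum, as `□ⁿ⊥` increases and `◇ᵐ⊤` decreases.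
  have hbox : box^[n] ⊥ ≤ box^[max n m] ⊥ :=
    h.box_mono.monotone_iterate_of_le_map bot_le (le_max_left n m)
  have hdia : dia^[max n m] ⊤ ≤ dia^[m] ⊤ :=
    h.dia_mono.antitone_iterate_of_map_le le_top (le_max_right n m)
  have hG : IsGLDFilter box dia (J : Set A)ᶜ :=
    { nonempty := ⟨_, hin⟩
      mem_of_le := fun x y hx hxy hy => hx (J.lower hxy hy)
      inf_mem := fun x y hx hy hxy => (hJ.mem_or_mem hxy).elim hx hy
      bot_not_mem := fun hb => hb J.bot_mem
      prime := fun x y hxy => by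
        by_contra! hne
        exact hxy (J.sup_mem (not_not.1 hne.1) (not_not.1 hne.2))
      gld := ⟨max n m, fun hd => hd (J.lower (hdia.trans le_sup_right) hout),
        fun hb => hin (J.lower (inf_le_right.trans hbox) hb)⟩ }
  exact hac ⟨_, hG⟩ (fun ha => hin (J.lower inf_le_left ha)) (J.lower le_sup_left hout)

/-- For a GLD-lattice `A`, the canonical neighborhood map is a GLD-filter
frame of `A`; in particular conditions (1) and (2) of the definition hold. -/
theorem stmt5 {A : Type*} [DistribLattice A] [BoundedOrder A] (box dia : A → A)
    (h : IsGLDLattice box dia) :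
    IsGLDFilterFrame box dia (canonN box dia) := by
  have htop : ∀ F : GLDFilter A box dia, box ⊤ ∈ F.1 := fun F => by
    obtain ⟨z, hz⟩ := F.2.nonempty
    rw [h.box_top]
    exact F.2.mem_of_le z ⊤ hz le_top
  have hbot : ∀ F : GLDFilter A box dia, dia ⊥ ∉ F.1 := fun F => by
    rw [h.dia_bot]
    exact F.2.bot_not_mem
  refine ⟨?_, ?_, ?_, ?_, ?_, ?_, ?_⟩
  · exact fun F => ⟨Set.univ, ⊤, ⊥, htop F, hbot F, Set.subset_univ _⟩
  · rintro F X Y ⟨a, b, ha, hb, hX⟩ hXY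
    exact ⟨a, b, ha, hb, hX.trans hXY⟩
  · rintro F X Y ⟨a, b, ha, hb, hX⟩ ⟨a', b', ha', hb', hY⟩
    refine ⟨a ⊓ a', b ⊔ b', ?_, ?_, ?_⟩
    · rw [h.box_inf]
      exact F.2.inf_mem _ _ ha ha'
    · rw [h.dia_sup]
      exact fun hd => (F.2.prime _ _ hd).elim hb hb'
    · rintro G ⟨hG, hG'⟩
      exact ⟨hX ⟨G.2.mem_of_le _ _ hG inf_le_left,
          fun hb => hG' (G.2.mem_of_le _ _ hb le_sup_left)⟩,
        hY ⟨G.2.mem_of_le _ _ hG inf_le_right,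
          fun hb => hG' (G.2.mem_of_le _ _ hb le_sup_right)⟩⟩
  · exact fun F x hx => ⟨x, ⊥, hx, hbot F, Set.inter_subset_left⟩
  · exact fun F x hx => ⟨⊤, x, htop F, hx, Set.inter_subset_right⟩
  · rintro F x hx ⟨a, b, ha, hb, hsub⟩
    have hle : a ≤ x ⊔ b := le_of_forall_gldFilter h fun G hGa => by
      by_cases hGb : b ∈ G.1
      · exact G.2.mem_of_le _ _ hGb le_sup_right
      · exact G.2.mem_of_le _ _ (hsub ⟨hGa, hGb⟩) le_sup_left
    have hmem := F.2.mem_of_le _ _ ha ((h.box_mono hle).trans (h.box_sup_le x b))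
    exact (F.2.prime _ _ hmem).elim hx hb
  · rintro F x hx ⟨a, b, ha, hb, hsub⟩
    have hle : a ⊓ x ≤ b := le_of_forall_gldFilter h fun G hG => by
      by_contra hGb
      exact hsub ⟨G.2.mem_of_le _ _ hG inf_le_left, hGb⟩ (G.2.mem_of_le _ _ hG inf_le_right)
    exact hb (F.2.mem_of_le _ _ (F.2.inf_mem _ _ ha hx)
      ((h.inf_dia_le a x).trans (h.dia_mono hle)))
end

section
/- Let A be a GLD-lattice, let N be the canonical neighborhood map of A, and define □_Z X = {F : F is a GLD-filter of A and X ∈ N(F)} for sets X of GLD-filters. Then the powerset of the set of GLD-filters of A, with its Boolean set operations and the operator □_Z, is a GL-algebra; that is, □_Z(univ) = univ, □_Z(X ∩ Y) = □_Z X ∩ □_Z Y for all X, Y, and □_Z((□_Z X)ᶜ ∪ X) ⊆ □_Z X for all X. -/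
section

variable {A : Type*} [DistribLattice A] [BoundedOrder A] {box dia : A → A}

theorem IsGLDFilter.inf_mem_iff {F : Set A} (hF : IsGLDFilter box dia F) {x y : A} :
    x ⊓ y ∈ F ↔ x ∈ F ∧ y ∈ F :=
  ⟨fun hxy => ⟨hF.mem_of_le _ _ hxy inf_le_left, hF.mem_of_le _ _ hxy inf_le_right⟩,
    fun hxy => hF.inf_mem _ _ hxy.1 hxy.2⟩

theorem IsGLDFilter.sup_mem_iff {F : Set A} (hF : IsGLDFilter box dia F) {x y : A} :
    x ⊔ y ∈ F ↔ x ∈ F ∨ y ∈ F :=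
  ⟨hF.prime x y, fun hxy => hxy.elim (fun hx => hF.mem_of_le _ _ hx le_sup_left)
    (fun hy => hF.mem_of_le _ _ hy le_sup_right)⟩

theorem IsGLDFilter.top_mem {F : Set A} (hF : IsGLDFilter box dia F) : ⊤ ∈ F :=
  let ⟨_, hx⟩ := hF.nonempty
  hF.mem_of_le _ _ hx le_top

theorem box_inf_box_mem (h : IsGLDLattice box dia) {F : Set A} (hF : IsGLDFilter box dia F) {x : A}
    (hx : box x ∈ F) : box (x ⊓ box x) ∈ F := by
  rw [h.box_inf, hF.inf_mem_iff]
  exact ⟨hx, hF.mem_of_le _ _ hx (h.box_le_box_box x)⟩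

theorem dia_sup_dia_not_mem (h : IsGLDLattice box dia) {F : Set A} (hF : IsGLDFilter box dia F)
    {y : A} (hy : dia y ∉ F) : dia (y ⊔ dia y) ∉ F := by
  rw [h.dia_sup, hF.sup_mem_iff]
  rintro (hy' | hy')
  · exact hy hy'
  · exact hy (hF.mem_of_le _ _ hy' (h.dia_dia_le y))

/-- The induction on rank behind the Löb inequality. -/
theorem mem_of_loeb (h : IsGLDLattice box dia) {X : Set (GLDFilter A box dia)} {x y : A}
    (hX : eta box dia x ∩ (eta box dia y)ᶜ ⊆ (boxZ box dia (canonN box dia) X)ᶜ ∪ X) (n : ℕ) :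
    ∀ G : GLDFilter A box dia, dia^[n] ⊤ ∉ G.1 → box^[n] ⊥ ∈ G.1 →
      x ⊓ box x ∈ G.1 → y ⊔ dia y ∉ G.1 → G ∈ X := by
  induction n with
  | zero => exact fun G _ hbot => (G.2.bot_not_mem hbot).elim
  | succ n ih =>
    intro G hdia hbox hx hy
    rw [Function.iterate_succ_apply'] at hdia hbox
    obtain ⟨hx₁, hx₂⟩ := G.2.inf_mem_iff.1 hx
    rw [G.2.sup_mem_iff, not_or] at hy
    have hG : G ∈ boxZ box dia (canonN box dia) X := by
      refine ⟨(x ⊓ box x) ⊓ box^[n] ⊥, (y ⊔ dia y) ⊔ dia^[n] ⊤, ?_, ?_, ?_⟩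
      · rw [h.box_inf, G.2.inf_mem_iff]
        exact ⟨box_inf_box_mem h G.2 hx₂, hbox⟩
      · rw [h.dia_sup, G.2.sup_mem_iff, not_or]
        exact ⟨dia_sup_dia_not_mem h G.2 hy.2, hdia⟩
      · rintro H ⟨hHx, hHy⟩
        obtain ⟨hHx₁, hHx₂⟩ := H.2.inf_mem_iff.1 hHx
        obtain ⟨hHy₁, hHy₂⟩ := not_or.1 (mt H.2.sup_mem_iff.2 hHy)
        exact ih H hHy₂ hHx₂ hHx₁ hHy₁
    exact (hX ⟨hx₁, hy.1⟩).resolve_left (not_not_intro hG)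

end

/-- For a GLD-lattice `A`, the powerset of the set of GLD-filters with the
operator `boxZ` induced by the canonical neighborhood map is a GL-algebra. -/
theorem stmt6 {A : Type*} [DistribLattice A] [BoundedOrder A] (box dia : A → A)
    (h : IsGLDLattice box dia) :
    boxZ box dia (canonN box dia) Set.univ = Set.univ ∧
    (∀ X Y : Set (GLDFilter A box dia),
      boxZ box dia (canonN box dia) (X ∩ Y) =
        boxZ box dia (canonN box dia) X ∩ boxZ box dia (canonN box dia) Y) ∧
    (∀ X : Set (GLDFilter A box dia),
      boxZ box dia (canonN box dia) ((boxZ box dia (canonN box dia) X)ᶜ ∪ X) ⊆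
        boxZ box dia (canonN box dia) X) := by
  refine ⟨?_, ?_, ?_⟩
  · refine Set.eq_univ_of_forall fun F => ⟨⊤, ⊥, ?_, ?_, Set.subset_univ _⟩
    · rw [h.box_top]
      exact F.2.top_mem
    · rw [h.dia_bot]
      exact F.2.bot_not_mem
  · intro X Y
    ext F
    constructor
    · rintro ⟨x, y, hx, hy, hxy⟩
      exact ⟨⟨x, y, hx, hy, hxy.trans Set.inter_subset_left⟩,
        ⟨x, y, hx, hy, hxy.trans Set.inter_subset_right⟩⟩
    · rintro ⟨⟨x, y, hx, hy, hxy⟩, ⟨x', y', hx', hy', hxy'⟩⟩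
      refine ⟨x ⊓ x', y ⊔ y', ?_, ?_, ?_⟩
      · rw [h.box_inf]
        exact F.2.inf_mem _ _ hx hx'
      · rw [h.dia_sup, F.2.sup_mem_iff, not_or]
        exact ⟨hy, hy'⟩
      · rintro G ⟨hGx, hGy⟩
        obtain ⟨hGx₁, hGx₂⟩ := G.2.inf_mem_iff.1 hGx
        obtain ⟨hGy₁, hGy₂⟩ := not_or.1 (mt G.2.sup_mem_iff.2 hGy)
        exact ⟨hxy ⟨hGx₁, hGy₁⟩, hxy' ⟨hGx₂, hGy₂⟩⟩
  · rintro X F ⟨x, y, hx, hy, hxy⟩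
    refine ⟨x ⊓ box x, y ⊔ dia y, box_inf_box_mem h F.2 hx, dia_sup_dia_not_mem h F.2 hy, ?_⟩
    rintro G ⟨hGx, hGy⟩
    obtain ⟨n, hdia, hbox⟩ := G.2.gld
    exact mem_of_loeb h hxy n G hdia hbox hGx hGy
end

section
/- Let A be a GLD-lattice, let N be the canonical neighborhood map of A, and define □_Z X = {F : F is a GLD-filter of A and X ∈ N(F)} for sets X of GLD-filters. Then □_Z X ⊆ □_Z □_Z X for every set X of GLD-filters, and the union over n ∈ ℕ of the sets □_Zⁿ ∅ (n-fold iteration of □_Z applied to the empty set) equals the set of all GLD-filters of A. -/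
/-- For a GLD-lattice `A` and the operator `boxZ` induced by the canonical
neighborhood map: `boxZ X ⊆ boxZ (boxZ X)` for all `X`, and the union of the
iterates `boxZⁿ ∅` is the set of all GLD-filters. -/
theorem stmt7 {A : Type*} [DistribLattice A] [BoundedOrder A] (box dia : A → A)
    (h : IsGLDLattice box dia) :
    (∀ X : Set (GLDFilter A box dia),
      boxZ box dia (canonN box dia) X ⊆
        boxZ box dia (canonN box dia) (boxZ box dia (canonN box dia) X)) ∧
    (⋃ n : ℕ, (boxZ box dia (canonN box dia))^[n] ∅) = Set.univ := by
  refine ⟨?_, ?_⟩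
  · rintro X F ⟨x, y, hx, hy, hX⟩
    -- The pair `(box x, dia y)` witnesses the claim, by the transitivity axioms.
    refine ⟨box x, dia y, F.2.mem_of_le _ _ hx (h.box_le_box_box x),
      fun hd => hy (F.2.mem_of_le _ _ hd (h.dia_dia_le y)), ?_⟩
    rintro G ⟨hG, hG'⟩
    exact ⟨x, y, hG, hG', hX⟩
  · have key : ∀ n : ℕ,
        eta box dia (box^[n] ⊥) ⊆ (boxZ box dia (canonN box dia))^[n] ∅ := by
      intro n
      induction n with
      | zero => exact fun F hF => F.2.bot_not_mem hF
      | succ n ih =>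
        intro F hF
        rw [Function.iterate_succ_apply']
        have hF' : box^[n + 1] ⊥ ∈ F.1 := hF
        rw [Function.iterate_succ_apply'] at hF'
        refine ⟨box^[n] ⊥, ⊥, hF', ?_, Set.inter_subset_left.trans ih⟩
        rw [h.dia_bot]
        exact F.2.bot_not_mem
    refine Set.eq_univ_of_forall fun F => ?_
    obtain ⟨n, -, hn⟩ := F.2.gld
    exact Set.mem_iUnion.2 ⟨n, key n hn⟩
end

section
/- On the powerset of ℕ∞ = ℕ ∪ {∞} (the linear order ω + 1), define □X = {n ∈ ℕ∞ : ∀ m ∈ ℕ∞, m < n → m ∈ X}. Then: (i) this operator makes the powerset Boolean algebra a GL-algebra, i.e., □(univ) = univ, □(X ∩ Y) = □X ∩ □Y, and □((□X)ᶜ ∪ X) ⊆ □X for all X, Y ⊆ ℕ∞; but (ii) it is not a GLD-algebra, since the union over n ∈ ℕ of the sets □ⁿ∅ (n-fold iteration of □ applied to ∅) equals ℕ and hence is not all of ℕ∞. -/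
/-!
The Löb inequality holds because `<` on `ℕ∞` is transitive and well-founded: the hypothesis
`n ∈ □(¬□X ⊔ X)` is exactly the step of a strong induction showing that every `m < n` lies in `X`.
The failure of the GLD condition comes from the explicit description `□ⁿ∅ = {x | x < n}`
(`boxO_iterate_empty`): the union of these initial segments omits `⊤`.
-/

/-- The box operator of the complex algebra of the Kripke frame `⟨ω + 1, R⟩`
where `(n, m) ∈ R` iff `m < n`: `□X = {n | ∀ m < n, m ∈ X}`. -/
def boxO : Set ℕ∞ → Set ℕ∞ :=
  fun X => {n : ℕ∞ | ∀ m : ℕ∞, m < n → m ∈ X}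

theorem boxO_iterate_empty (n : ℕ) : boxO^[n] ∅ = {x : ℕ∞ | x < n} := by
  induction n with
  | zero => simp
  | succ n ih =>
    rw [Function.iterate_succ_apply', ih]
    ext x
    simp only [boxO, Set.mem_ofPred_eq, Nat.cast_add, Nat.cast_one]
    rw [ENat.lt_add_one_iff (ENat.natCast_ne_top n)]
    exact ⟨fun h => le_of_forall_lt h, fun h m hm => hm.trans_le h⟩

/-- The union consists of the finite elements, since `x < n` for some natural `n` iff `x ≠ ⊤`. -/
theorem iUnion_boxO_iterate_empty : (⋃ n : ℕ, boxO^[n] ∅) = {x : ℕ∞ | x ≠ ⊤} := by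
  ext x
  simp only [boxO_iterate_empty, Set.mem_iUnion, Set.mem_ofPred_eq]
  constructor
  · rintro ⟨n, hn⟩
    exact hn.ne_top
  · intro hx
    lift x to ℕ using hx
    exact ⟨x + 1, by exact_mod_cast Nat.lt_succ_self x⟩

theorem boxO_loeb (X : Set ℕ∞) : boxO ((boxO X)ᶜ ∪ X) ⊆ boxO X := by
  intro n hn m
  induction m using WellFoundedLT.induction with
  | ind m ih =>
    intro hm
    rcases hn m hm with h | h
    -- The induction hypothesis gives `m ∈ □X`, so only the alternative `m ∈ X` survives.
    · exact absurd (fun k hk => ih k hk (hk.trans hm)) h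
    · exact h

/-- The powerset of `ω + 1` with `boxO` is a GL-algebra, but not a
GLD-algebra: the union of the iterates `□ⁿ∅` is `ℕ`, hence not everything. -/
theorem stmt9 :
    (boxO Set.univ = Set.univ ∧
     (∀ X Y : Set ℕ∞, boxO (X ∩ Y) = boxO X ∩ boxO Y) ∧
     (∀ X : Set ℕ∞, boxO ((boxO X)ᶜ ∪ X) ⊆ boxO X)) ∧
    (⋃ n : ℕ, boxO^[n] ∅) = {x : ℕ∞ | x ≠ ⊤} ∧
    (⋃ n : ℕ, boxO^[n] ∅) ≠ Set.univ := by
  refine ⟨⟨?_, ?_, boxO_loeb⟩, iUnion_boxO_iterate_empty, ?_⟩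
  · ext x
    simp [boxO]
  · intro X Y
    ext x
    simp only [boxO, Set.mem_inter_iff, Set.mem_ofPred_eq]
    exact ⟨fun h => ⟨fun m hm => (h m hm).1, fun m hm => (h m hm).2⟩,
      fun h m hm => ⟨h.1 m hm, h.2 m hm⟩⟩
  · rw [iUnion_boxO_iterate_empty]
    intro h
    exact (h ▸ Set.mem_univ (⊤ : ℕ∞) : (⊤ : ℕ∞) ∈ {x : ℕ∞ | x ≠ ⊤}) rfl
end

section
/- For positive modal formulas φ, ψ, the following are equivalent: (a) for every GL-algebra A (regarded as a modal distributive lattice via ◇x = ¬□¬x) and every valuation v on A, v(φ) ≤ v(ψ); (b) for every GLD-lattice A and every valuation v on A, v(φ) ≤ v(ψ). -/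
/-!
Both directions are proved contrapositively through Kripke semantics: a failing inequality is
refuted on the powerset algebra of a frame whose worlds are prime ideals (a formula being true at a
prime ideal when its value lies *outside* it, i.e. in the complementary prime filter).

* If `φ ≤ ψ` fails in a GLD-lattice `A`, then, since `v φ` is the least upper bound of the
  `v φ ⊓ □ⁿ⊥`, some `v φ ⊓ □ⁿ⊥ ≰ v ψ`; so some prime filter contains `v φ` and `□ⁿ⊥`, but not
  `v ψ`. Take the canonical frame of Dunn's positive modal logic (`LatRel`), restricted to the prime
  filters containing some `□ⁿ⊥`. It is transitive, and every step lowers the least such `n`, so it is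
  conversely well-founded and its powerset is a GL-algebra. The truth lemma rests on
  `exists_latRel_box` and `exists_latRel_dia`.

* If `φ ≤ ψ` fails in a GL-algebra `B`, let `S` be the finite set of values of arguments of boxes
  occurring in `φ`, `ψ` (with `◇ = ¬□¬`). On the ultrafilters of `B` use Solovay's relation `glRel S`:
  `U` sees `V` when `□s ∈ U` implies `s, □s ∈ V` for `s ∈ S`, and some `s ∈ S` has
  `□s ∈ V`, `□s ∉ U`. It is transitive and its chains have length at most `|S|`, so its powerset is a
  GLD-lattice. Löb's axiom gives the existence of witnesses (`exists_glRel`).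
-/

/-- Positive modal formulas, built from propositional variables and `⊥`, `⊤`
by `∨`, `∧`, `◇`, `□`. -/
inductive PosForm : Type
  | var : ℕ → PosForm
  | bot : PosForm
  | top : PosForm
  | or : PosForm → PosForm → PosForm
  | and : PosForm → PosForm → PosForm
  | dia : PosForm → PosForm
  | box : PosForm → PosForm

/-- The value of a positive modal formula in a bounded lattice equipped with
operations `box` and `dia`, under a valuation `v` of the variables. -/
def PosForm.eval {A : Type*} [Lattice A] [BoundedOrder A]
    (box dia : A → A) (v : ℕ → A) : PosForm → A
  | .var p => v p
  | .bot => ⊥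
  | .top => ⊤
  | .or φ ψ => PosForm.eval box dia v φ ⊔ PosForm.eval box dia v ψ
  | .and φ ψ => PosForm.eval box dia v φ ⊓ PosForm.eval box dia v ψ
  | .dia φ => dia (PosForm.eval box dia v φ)
  | .box φ => box (PosForm.eval box dia v φ)

/-- A GL-algebra structure on a Boolean algebra `A`, given by the modal
operation `box`. -/
structure IsGLAlgebra {A : Type*} [BooleanAlgebra A] (box : A → A) : Prop where
  box_top : box ⊤ = ⊤
  box_inf : ∀ x y : A, box (x ⊓ y) = box x ⊓ box y
  loeb : ∀ x : A, box ((box x)ᶜ ⊔ x) ≤ box x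

/-! ### Powerset algebras of Kripke frames -/

/-- The box of the powerset algebra of a frame. -/
def kbox {W : Type*} (R : W → W → Prop) (X : Set W) : Set W := {w | ∀ u, R w u → u ∈ X}

/-- The diamond of the powerset algebra of a frame. -/
def kdia {W : Type*} (R : W → W → Prop) (X : Set W) : Set W := {w | ∃ u, R w u ∧ u ∈ X}

theorem compl_kbox_compl {W : Type*} (R : W → W → Prop) :
    (fun X : Set W => (kbox R Xᶜ)ᶜ) = kdia R := by
  funext X
  ext w
  simp [kbox, kdia]

/-- Löb's axiom holds on frames that are transitive and conversely well-founded, the latter being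
witnessed by the accessibility of every world. -/
theorem isGLAlgebra_kbox {W : Type*} (R : W → W → Prop)
    (htr : ∀ a b c, R a b → R b c → R a c) (hwf : ∀ w, Acc (fun a b => R b a) w) :
    IsGLAlgebra (kbox R) where
  box_top := by ext; simp [kbox]
  box_inf X Y := by
    ext w
    exact ⟨fun h => ⟨fun u hu => (h u hu).1, fun u hu => (h u hu).2⟩,
      fun h u hu => ⟨h.1 u hu, h.2 u hu⟩⟩
  loeb X := by
    intro w hw u hu
    induction hwf u with
    | intro u _ ih =>
      rcases hw u hu with h | h
      · exact absurd (fun t ht => ih t ht (htr _ _ _ hu ht)) h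
      · exact h

theorem mem_kbox_iterate {W : Type*} (R : W → W → Prop) (r : W → ℕ)
    (hr : ∀ a b, R a b → r b < r a) (n : ℕ) :
    ∀ w, r w < n → w ∈ (kbox R)^[n] ⊥ := by
  induction n with
  | zero => intro w h; omega
  | succ n ih =>
    intro w h
    rw [Function.iterate_succ_apply']
    intro u hu
    have := hr _ _ hu
    exact ih u (by omega)

theorem le_of_mem_kdia_iterate {W : Type*} (R : W → W → Prop) (r : W → ℕ)
    (hr : ∀ a b, R a b → r b < r a) (n : ℕ) :
    ∀ w, w ∈ (kdia R)^[n] ⊤ → n ≤ r w := by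
  induction n with
  | zero => intro w _; omega
  | succ n ih =>
    intro w h
    rw [Function.iterate_succ_apply'] at h
    obtain ⟨u, hu, h⟩ := h
    have := hr _ _ hu
    have := ih u h
    omega

/-- On a transitive frame of finite height (witnessed by the bounded rank `r`), some `□ⁿ⊥` is `⊤` and
some `◇ⁿ⊤` is `⊥`, so the two approximation conditions of GLD-lattices are trivial. -/
theorem isGLDLattice_kbox {W : Type*} (R : W → W → Prop)
    (htr : ∀ a b c, R a b → R b c → R a c) (r : W → ℕ) (hr : ∀ a b, R a b → r b < r a)
    (N : ℕ) (hN : ∀ w, r w < N) :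
    IsGLDLattice (kbox R) (kdia R) where
  box_top := by ext; simp [kbox]
  dia_bot := by ext; simp [kdia]
  box_sup_le X Y := by
    intro w hw
    by_cases h : w ∈ kdia R Y
    · exact Or.inr h
    · refine Or.inl fun u hu => ?_
      rcases hw u hu with h' | h'
      · exact h'
      · exact absurd ⟨u, hu, h'⟩ h
  inf_dia_le X Y := by
    rintro w ⟨h, u, hu, hy⟩
    exact ⟨u, hu, h u hu, hy⟩
  dia_sup X Y := by
    ext w
    constructor
    · rintro ⟨u, hu, h | h⟩
      · exact Or.inl ⟨u, hu, h⟩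
      · exact Or.inr ⟨u, hu, h⟩
    · rintro (⟨u, hu, h⟩ | ⟨u, hu, h⟩)
      · exact ⟨u, hu, Or.inl h⟩
      · exact ⟨u, hu, Or.inr h⟩
  box_inf X Y := by
    ext w
    exact ⟨fun h => ⟨fun u hu => (h u hu).1, fun u hu => (h u hu).2⟩,
      fun h u hu => ⟨h.1 u hu, h.2 u hu⟩⟩
  dia_dia_le X := by
    rintro w ⟨u, hu, t, ht, h⟩
    exact ⟨t, htr _ _ _ hu ht, h⟩
  box_le_box_box X := by
    intro w hw u hu t ht
    exact hw t (htr _ _ _ hu ht)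
  isLUB_inf_boxIter X := by
    refine ⟨?_, fun Y hY => ?_⟩
    · rintro _ ⟨n, rfl⟩
      exact inf_le_left
    · intro w hw
      exact hY ⟨N, rfl⟩ ⟨hw, mem_kbox_iterate R r hr N w (hN w)⟩
  isGLB_sup_diaIter X := by
    refine ⟨?_, fun Y hY => ?_⟩
    · rintro _ ⟨n, rfl⟩
      exact le_sup_left
    · intro w hw
      rcases hY ⟨N, rfl⟩ hw with h | h
      · exact h
      · exact absurd (le_of_mem_kdia_iterate R r hr N w h) (not_le.2 (hN w))

/-! ### Prime ideals of distributive lattices -/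

/-- The prime ideals of a lattice; each one encodes the prime filter complementary to it. -/
abbrev PI (A : Type*) [Lattice A] : Type _ := {I : Order.Ideal A // I.IsPrime}

section PrimeIdeals

variable {A : Type*} [DistribLattice A]

theorem PI.top_notMem [BoundedOrder A] (P : PI A) : ⊤ ∉ P.1 :=
  Order.Ideal.IsProper.top_notMem P.2.toIsProper

theorem PI.inf_mem (P : PI A) {x y : A} : x ⊓ y ∈ P.1 ↔ x ∈ P.1 ∨ y ∈ P.1 :=
  ⟨P.2.mem_or_mem, fun h => h.elim (P.1.lower inf_le_left) (P.1.lower inf_le_right)⟩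

theorem PI.sup_mem (P : PI A) {x y : A} : x ⊔ y ∈ P.1 ↔ x ∈ P.1 ∧ y ∈ P.1 :=
  Order.Ideal.sup_mem_iff

variable [BoundedOrder A]

/-- The prime ideal theorem, with the filter `F` and the ideal `I` given by predicates. -/
theorem exists_PI_of_predicates (F I : A → Prop) (Ftop : F ⊤)
    (Fup : ∀ x y, x ≤ y → F x → F y) (Finf : ∀ x y, F x → F y → F (x ⊓ y)) (Ibot : I ⊥)
    (Idown : ∀ x y, x ≤ y → I y → I x) (Isup : ∀ x y, I x → I y → I (x ⊔ y))
    (hdis : ∀ x, F x → ¬ I x) :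
    ∃ Q : PI A, (∀ x, F x → x ∉ Q.1) ∧ ∀ x, I x → x ∈ Q.1 := by
  have hF : Order.IsPFilter {x | F x} := Order.IsPFilter.of_def ⟨⊤, Ftop⟩
    (fun x hx y hy => ⟨x ⊓ y, Finf x y hx hy, inf_le_left, inf_le_right⟩)
    (fun {x y} hxy hx => Fup x y hxy hx)
  let J : Order.Ideal A :=
    { carrier := {x | I x}
      lower' := fun x y hxy hx => Idown y x hxy hx
      nonempty' := ⟨⊥, Ibot⟩
      directed' := fun x hx y hy => ⟨x ⊔ y, Isup x y hx hy, le_sup_left, le_sup_right⟩ }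
  have hd : Disjoint (hF.toPFilter : Set A) (J : Set A) :=
    Set.disjoint_left.2 fun x hx hy => hdis x hx hy
  obtain ⟨Q, hQ, hJQ, hFQ⟩ := DistribLattice.prime_ideal_of_disjoint_filter_ideal hd
  exact ⟨⟨Q, hQ⟩, fun x hx hxQ => Set.disjoint_left.1 hFQ hx hxQ, fun x hx => hJQ hx⟩

theorem exists_PI_of_not_le {a b : A} (h : ¬ a ≤ b) : ∃ Q : PI A, a ∉ Q.1 ∧ b ∈ Q.1 := by
  obtain ⟨Q, h1, h2⟩ := exists_PI_of_predicates (fun x => a ≤ x) (fun x => x ≤ b) le_top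
    (fun _ _ h h' => h'.trans h) (fun _ _ => le_inf) bot_le (fun _ _ h h' => h.trans h')
    (fun _ _ => sup_le) (fun _ h1 h2 => h (h1.trans h2))
  exact ⟨Q, h1 _ le_rfl, h2 _ le_rfl⟩

end PrimeIdeals

/-! ### The canonical frame of a GLD-lattice -/

/-- The canonical accessibility relation of a lattice with `□` and `◇`. In terms of the prime filters
complementary to `P` and `Q`, it reads `□⁻¹P ⊆ Q ⊆ ◇⁻¹P`. -/
def LatRel {A : Type*} [Lattice A] (box dia : A → A) (P Q : PI A) : Prop :=
  ∀ x, (box x ∉ P.1 → x ∉ Q.1) ∧ (x ∉ Q.1 → dia x ∉ P.1)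

namespace IsGLDLattice

variable {A : Type*} [DistribLattice A] [BoundedOrder A] {box dia : A → A}

theorem box_mono_s11 (h : IsGLDLattice box dia) {x y : A} (hxy : x ≤ y) : box x ≤ box y := by
  have := h.box_inf x y
  rw [inf_eq_left.2 hxy] at this
  exact inf_eq_left.1 this.symm

theorem dia_mono_s11 (h : IsGLDLattice box dia) {x y : A} (hxy : x ≤ y) : dia x ≤ dia y := by
  have := h.dia_sup x y
  rw [sup_eq_right.2 hxy] at this
  exact sup_eq_right.1 this.symm

theorem latRel_trans (h : IsGLDLattice box dia) {P Q T : PI A}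
    (hPQ : LatRel box dia P Q) (hQT : LatRel box dia Q T) : LatRel box dia P T := fun x =>
  ⟨fun hx => (hQT x).1 ((hPQ _).1 fun hb => hx (P.1.lower (h.box_le_box_box x) hb)),
    fun hx hd => (hPQ _).2 ((hQT x).2 hx) (P.1.lower (h.dia_dia_le x) hd)⟩

/-- If `□x` is false at `P`, then `x` is false at some successor: the filter `□⁻¹P` is disjoint from
the ideal generated by `x` and `{z | ◇z false at P}`, by `□(x ⊔ z) ≤ □x ⊔ ◇z`. -/
theorem exists_latRel_box (h : IsGLDLattice box dia) (P : PI A) {x : A} (hx : box x ∈ P.1) :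
    ∃ Q, LatRel box dia P Q ∧ x ∈ Q.1 := by
  obtain ⟨Q, h1, h2⟩ := exists_PI_of_predicates (fun y => box y ∉ P.1)
    (fun y => ∃ z, dia z ∈ P.1 ∧ y ≤ x ⊔ z)
    (by rw [h.box_top]; exact P.top_notMem)
    (fun y z hyz hy hz => hy (P.1.lower (h.box_mono_s11 hyz) hz))
    (fun y z hy hz => by rw [h.box_inf, P.inf_mem]; tauto)
    ⟨⊥, by rw [h.dia_bot]; exact P.1.bot_mem, bot_le⟩
    (fun y z hyz ⟨t, ht, hz⟩ => ⟨t, ht, hyz.trans hz⟩)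
    (fun y z ⟨t, ht, hy⟩ ⟨s, hs, hz⟩ => ⟨t ⊔ s, by rw [h.dia_sup, P.sup_mem]; exact ⟨ht, hs⟩,
      sup_le (hy.trans (sup_le_sup_left le_sup_left _))
        (hz.trans (sup_le_sup_left le_sup_right _))⟩)
    (fun y hy ⟨z, hz, hyz⟩ => hy (P.1.lower ((h.box_mono_s11 hyz).trans (h.box_sup_le x z))
      (P.sup_mem.2 ⟨hx, hz⟩)))
  exact ⟨Q, fun y => ⟨h1 y, fun hy hd => hy (h2 y ⟨y, hd, le_sup_right⟩)⟩,
    h2 x ⟨⊥, by rw [h.dia_bot]; exact P.1.bot_mem, le_sup_left⟩⟩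

/-- If `◇x` is true at `P`, then `x` is true at some successor; dual to `exists_latRel_box`, by
`□z ⊓ ◇x ≤ ◇(z ⊓ x)`. -/
theorem exists_latRel_dia (h : IsGLDLattice box dia) (P : PI A) {x : A} (hx : dia x ∉ P.1) :
    ∃ Q, LatRel box dia P Q ∧ x ∉ Q.1 := by
  obtain ⟨Q, h1, h2⟩ := exists_PI_of_predicates (fun y => ∃ z, box z ∉ P.1 ∧ z ⊓ x ≤ y)
    (fun y => dia y ∈ P.1)
    ⟨⊤, by rw [h.box_top]; exact P.top_notMem, le_top⟩
    (fun y z hyz ⟨t, ht, hz⟩ => ⟨t, ht, hz.trans hyz⟩)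
    (fun y z ⟨t, ht, hy⟩ ⟨s, hs, hz⟩ => ⟨t ⊓ s, by rw [h.box_inf, P.inf_mem]; tauto,
      le_inf ((inf_le_inf_right _ inf_le_left).trans hy)
        ((inf_le_inf_right _ inf_le_right).trans hz)⟩)
    (by rw [h.dia_bot]; exact P.1.bot_mem)
    (fun y z hyz hz => P.1.lower (h.dia_mono_s11 hyz) hz)
    (fun y z hy hz => by rw [h.dia_sup, P.sup_mem]; exact ⟨hy, hz⟩)
    (fun y ⟨z, hz, hzy⟩ hy => by
      have := P.1.lower ((h.inf_dia_le z x).trans (h.dia_mono_s11 hzy)) hy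
      exact (P.inf_mem.1 this).elim hz hx)
  exact ⟨Q, fun y => ⟨fun hy => h1 y ⟨y, hy, inf_le_left⟩, fun hy hd => hy (h2 y hd)⟩,
    h1 x ⟨⊤, by rw [h.box_top]; exact P.top_notMem, inf_le_right⟩⟩

end IsGLDLattice

/-- Prime ideals avoiding some `□ⁿ⊥`: the worlds of finite height in the canonical frame. -/
abbrev FinPI {A : Type*} [DistribLattice A] [BoundedOrder A] (box : A → A) : Type _ :=
  {P : PI A // ∃ n : ℕ, box^[n] ⊥ ∉ P.1}

section FinPI

variable {A : Type*} [DistribLattice A] [BoundedOrder A] {box dia : A → A}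

theorem acc_finPI (n : ℕ) : ∀ P : FinPI box, box^[n] ⊥ ∉ P.1.1 →
    Acc (fun a b : FinPI box => LatRel box dia b.1 a.1) P := by
  induction n with
  | zero => intro P hP; exact absurd P.1.1.bot_mem hP
  | succ n ih =>
    intro P hP
    rw [Function.iterate_succ_apply'] at hP
    exact ⟨_, fun Q hQ => ih Q ((hQ _).1 hP)⟩

/-- Successors of worlds of finite height have finite height. -/
theorem LatRel.finite_height {P Q : PI A} (hbox : Monotone box) (hPQ : LatRel box dia P Q)
    (hP : ∃ n : ℕ, box^[n] ⊥ ∉ P.1) : ∃ n : ℕ, box^[n] ⊥ ∉ Q.1 := by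
  obtain ⟨n, hn⟩ := hP
  refine ⟨n, (hPQ _).1 fun hb => hn (P.1.lower ?_ hb)⟩
  rw [← Function.iterate_succ_apply' box n, Function.iterate_succ_apply]
  exact hbox.iterate n bot_le

/-- The truth lemma for the canonical frame of a GLD-lattice. -/
theorem mem_eval_finPI (h : IsGLDLattice box dia) (v : ℕ → A) (χ : PosForm) :
    ∀ P : FinPI box,
      P ∈ χ.eval (kbox fun P Q : FinPI box => LatRel box dia P.1 Q.1)
        (kdia fun P Q : FinPI box => LatRel box dia P.1 Q.1)
        (fun p => {P : FinPI box | v p ∉ P.1.1}) ↔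
      χ.eval box dia v ∉ P.1.1 := by
  have hmono : Monotone box := fun _ _ => h.box_mono_s11
  induction χ with
  | var p => intro P; exact Iff.rfl
  | bot => intro P; exact ⟨fun h => h.elim, fun h => h P.1.1.bot_mem⟩
  | top => intro P; exact ⟨fun _ => P.1.top_notMem, fun _ => trivial⟩
  | or a b iha ihb =>
    intro P
    simp only [PosForm.eval, P.1.sup_mem, Set.sup_eq_union, Set.mem_union, iha, ihb]
    tauto
  | and a b iha ihb =>
    intro P
    simp only [PosForm.eval, P.1.inf_mem, Set.inf_eq_inter, Set.mem_inter_iff, iha, ihb]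
    tauto
  | dia a ih =>
    intro P
    simp only [PosForm.eval]
    constructor
    · rintro ⟨Q, hPQ, hQ⟩
      exact (hPQ _).2 ((ih Q).1 hQ)
    · intro hx
      obtain ⟨Q, hPQ, hQ⟩ := h.exists_latRel_dia P.1 hx
      exact ⟨⟨Q, hPQ.finite_height hmono P.2⟩, hPQ, (ih _).2 hQ⟩
  | box a ih =>
    intro P
    simp only [PosForm.eval]
    constructor
    · intro hP hx
      obtain ⟨Q, hPQ, hQ⟩ := h.exists_latRel_box P.1 hx
      exact (ih _).1 (hP ⟨Q, hPQ.finite_height hmono P.2⟩ hPQ) hQ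
    · intro hx Q hPQ
      exact (ih Q).2 ((hPQ _).1 hx)

end FinPI

/-! ### The finite-height frame of a GL-algebra -/

namespace IsGLAlgebra

variable {B : Type*} [BooleanAlgebra B] {box : B → B}

theorem box_mono_s11 (h : IsGLAlgebra box) {x y : B} (hxy : x ≤ y) : box x ≤ box y := by
  have := h.box_inf x y
  rw [inf_eq_left.2 hxy] at this
  exact inf_eq_left.1 this.symm

/-- Transitivity `□x ≤ □□x`, in the strengthened form obtained from Löb's axiom at `x ⊓ □x`. -/
theorem box_le_box_inf_box (h : IsGLAlgebra box) (x : B) : box x ≤ box (x ⊓ box x) := by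
  refine (h.box_mono_s11 ?_).trans (h.loeb _)
  have h1 : box (x ⊓ box x) ≤ box x := h.box_mono_s11 inf_le_left
  rw [sup_comm, ← himp_eq, le_himp_iff]
  exact inf_le_inf_left x h1

end IsGLAlgebra

/-- Solovay's accessibility relation on ultrafilters of `B` relative to a finite `S ⊆ B` (ultrafilters
being encoded by the complementary prime ideals). -/
def glRel {B : Type*} [BooleanAlgebra B] (box : B → B) (S : Finset B) (U V : PI B) : Prop :=
  (∀ s ∈ S, box s ∉ U.1 → s ∉ V.1 ∧ box s ∉ V.1) ∧ ∃ s ∈ S, box s ∈ U.1 ∧ box s ∉ V.1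

open Classical in
/-- The number of `s ∈ S` with `□s` false at `U`; it drops strictly along `glRel box S`. -/
noncomputable def glRank {B : Type*} [BooleanAlgebra B] (box : B → B) (S : Finset B) (U : PI B) :
    ℕ :=
  (S.filter fun s => box s ∈ U.1).card

section Solovay

variable {B : Type*} [BooleanAlgebra B] {box : B → B} {S : Finset B}

theorem glRel_trans (U V T : PI B) (h1 : glRel box S U V) (h2 : glRel box S V T) :
    glRel box S U T := by
  refine ⟨fun s hs hU => h2.1 s hs (h1.1 s hs hU).2, ?_⟩
  obtain ⟨s, hs, hU, hV⟩ := h1.2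
  exact ⟨s, hs, hU, (h2.1 s hs hV).2⟩

theorem glRank_lt (U V : PI B) (h : glRel box S U V) : glRank box S V < glRank box S U := by
  classical
  obtain ⟨s, hs, hU, hV⟩ := h.2
  refine Finset.card_lt_card ((Finset.ssubset_iff_of_subset ?_).2 ⟨s, ?_, ?_⟩)
  · intro t ht
    simp only [Finset.mem_filter] at ht ⊢
    exact ⟨ht.1, by_contra fun hc => (h.1 t ht.1 hc).2 ht.2⟩
  · simp [hs, hU]
  · simp [hV]

/-- If `□s` is false at `U`, then `s` is false at some successor. With `m` the meet of all `t ⊓ □t`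
for `t ∈ S` with `□t` true at `U`, `□m` is true at `U`; if no suitable successor existed then
`m ⊓ □s ≤ s`, whence `□m ≤ □(¬□s ⊔ s) ≤ □s`. -/
theorem exists_glRel (h : IsGLAlgebra box) (U : PI B) {s : B} (hs : s ∈ S) (hU : box s ∈ U.1) :
    ∃ V, glRel box S U V ∧ s ∈ V.1 := by
  classical
  have key : ∀ T : Finset B, (∀ t ∈ T, box t ∉ U.1) →
      box (T.inf fun t => t ⊓ box t) ∉ U.1 := by
    intro T
    induction T using Finset.induction_on with
    | empty => intro _; rw [Finset.inf_empty, h.box_top]; exact U.top_notMem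
    | insert a T _ ih =>
      intro hT
      rw [Finset.inf_insert, h.box_inf, U.inf_mem]
      rintro (hb | hb)
      · exact hT a (Finset.mem_insert_self _ _) (U.1.lower (h.box_le_box_inf_box a) hb)
      · exact ih (fun t ht => hT t (Finset.mem_insert_of_mem ht)) hb
  set m := (S.filter fun t => box t ∉ U.1).inf fun t => t ⊓ box t with hm
  have hmU : box m ∉ U.1 := key _ fun t ht => (Finset.mem_filter.1 ht).2
  have hle : ¬ m ⊓ box s ≤ s := by
    intro hle
    rw [← le_himp_iff, himp_eq, sup_comm] at hle
    exact hmU (U.1.lower ((h.box_mono_s11 hle).trans (h.loeb s)) hU)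
  obtain ⟨V, hV, hsV⟩ := exists_PI_of_not_le hle
  rw [V.inf_mem, not_or] at hV
  refine ⟨V, ⟨fun t ht hb => ?_, s, hs, hU, hV.2⟩, hsV⟩
  have hmt : m ≤ t ⊓ box t :=
    Finset.inf_le (f := fun t => t ⊓ box t) (Finset.mem_filter.2 ⟨ht, hb⟩)
  exact ⟨fun hc => hV.1 (V.1.lower (hmt.trans inf_le_left) hc),
    fun hc => hV.1 (V.1.lower (hmt.trans inf_le_right) hc)⟩

theorem PI.compl_mem (P : PI B) {x : B} : xᶜ ∈ P.1 ↔ x ∉ P.1 := by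
  constructor
  · intro h1 h2
    apply P.top_notMem
    rw [← sup_compl_eq_top (x := x)]
    exact P.sup_mem.2 ⟨h2, h1⟩
  · intro h1
    have : x ⊓ xᶜ ∈ P.1 := by rw [inf_compl_eq_bot]; exact P.1.bot_mem
    exact (P.inf_mem.1 this).resolve_left h1

open Classical in
/-- The values of the arguments of all boxes occurring in a formula, where `◇χ` is read as
`¬□¬χ`. -/
noncomputable def boxArgs (box : B → B) (v : ℕ → B) : PosForm → Finset B
  | .var _ => ∅
  | .bot => ∅
  | .top => ∅
  | .or a b => boxArgs box v a ∪ boxArgs box v b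
  | .and a b => boxArgs box v a ∪ boxArgs box v b
  | .dia a => insert (a.eval box (fun x => (box xᶜ)ᶜ) v)ᶜ (boxArgs box v a)
  | .box a => insert (a.eval box (fun x => (box xᶜ)ᶜ) v) (boxArgs box v a)

/-- The truth lemma for the frame `glRel box S`. -/
theorem mem_eval_glRel (h : IsGLAlgebra box) (v : ℕ → B) (χ : PosForm) :
    boxArgs box v χ ⊆ S → ∀ U : PI B,
      (U ∈ χ.eval (kbox (glRel box S)) (kdia (glRel box S)) (fun p => {U : PI B | v p ∉ U.1}) ↔
      χ.eval box (fun x => (box xᶜ)ᶜ) v ∉ U.1) := by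
  classical
  induction χ with
  | var p => intro _ U; exact Iff.rfl
  | bot => intro _ U; exact ⟨fun h => h.elim, fun h => h U.1.bot_mem⟩
  | top => intro _ U; exact ⟨fun _ => U.top_notMem, fun _ => trivial⟩
  | or a b iha ihb =>
    intro hS U
    rw [boxArgs, Finset.union_subset_iff] at hS
    simp only [PosForm.eval, U.sup_mem, Set.sup_eq_union, Set.mem_union, iha hS.1, ihb hS.2]
    tauto
  | and a b iha ihb =>
    intro hS U
    rw [boxArgs, Finset.union_subset_iff] at hS
    simp only [PosForm.eval, U.inf_mem, Set.inf_eq_inter, Set.mem_inter_iff, iha hS.1, ihb hS.2]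
    tauto
  | dia a ih =>
    intro hS U
    rw [boxArgs, Finset.insert_subset_iff] at hS
    simp only [PosForm.eval, U.compl_mem, not_not]
    constructor
    · rintro ⟨V, hUV, hV⟩
      by_contra hc
      exact (hUV.1 _ hS.1 hc).1 (V.compl_mem.2 ((ih hS.2 V).1 hV))
    · intro hx
      obtain ⟨V, hUV, hV⟩ := exists_glRel h U hS.1 hx
      exact ⟨V, hUV, (ih hS.2 V).2 (V.compl_mem.1 hV)⟩
  | box a ih =>
    intro hS U
    rw [boxArgs, Finset.insert_subset_iff] at hS
    simp only [PosForm.eval]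
    constructor
    · intro hU hx
      obtain ⟨V, hUV, hV⟩ := exists_glRel h U hS.1 hx
      exact (ih hS.2 V).1 (hU V hUV) hV
    · intro hx V hUV
      exact (ih hS.2 V).2 (hUV.1 _ hS.1 hx).1

end Solovay

/-- A sequent of positive modal formulas holds in all GL-algebras (with
`◇x = ¬□¬x`) iff it holds in all GLD-lattices. -/
theorem stmt11 (φ ψ : PosForm) :
    (∀ (B : Type) [BooleanAlgebra B], ∀ box : B → B, IsGLAlgebra box →
      ∀ v : ℕ → B,
        PosForm.eval box (fun x => (box xᶜ)ᶜ) v φ ≤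
          PosForm.eval box (fun x => (box xᶜ)ᶜ) v ψ)
    ↔
    (∀ (A : Type) [DistribLattice A] [BoundedOrder A], ∀ box dia : A → A,
      IsGLDLattice box dia →
      ∀ v : ℕ → A, PosForm.eval box dia v φ ≤ PosForm.eval box dia v ψ) := by
  classical
  constructor
  · intro H A _ _ box dia h v
    refine (h.isLUB_inf_boxIter (φ.eval box dia v)).2 ?_
    rintro _ ⟨n, rfl⟩
    by_contra hle
    obtain ⟨P, hP, hψ⟩ := exists_PI_of_not_le hle
    rw [P.inf_mem, not_or] at hP
    have hGL := isGLAlgebra_kbox (fun P Q : FinPI box => LatRel box dia P.1 Q.1)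
      (fun _ _ _ => h.latRel_trans) (fun P => P.2.elim fun n hn => acc_finPI n P hn)
    have := H (Set (FinPI box)) _ hGL (fun p => {P : FinPI box | v p ∉ P.1.1})
    rw [compl_kbox_compl] at this
    exact (mem_eval_finPI h v ψ ⟨P, n, hP.2⟩).1
      (this ((mem_eval_finPI h v φ ⟨P, n, hP.2⟩).2 hP.1)) hψ
  · intro H B _ box h v
    by_contra hle
    obtain ⟨U, hφ, hψ⟩ := exists_PI_of_not_le hle
    set S := boxArgs box v φ ∪ boxArgs box v ψ
    have hGLD := isGLDLattice_kbox (glRel box S) glRel_trans (glRank box S) glRank_lt (S.card + 1)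
      (fun w => Nat.lt_succ_of_le (Finset.card_filter_le _ _))
    have := H (Set (PI B)) _ _ hGLD (fun p => {U : PI B | v p ∉ U.1})
    exact (mem_eval_glRel h v ψ Finset.subset_union_right U).1
      (this ((mem_eval_glRel h v φ Finset.subset_union_left U).2 hφ)) hψ
end

section
/- For all positive modal formulas φ and ψ, the implication φ ⊃ ψ is a theorem of the modal logic GL if and only if the sequent φ ⊢ ψ is provable in the proof system PGL⁺. -/
/-- The proof system `PGL⁺` for sequents `φ ⊢ ψ` of positive modal formulas,
including the two `ω`-rules. -/
inductive PGL : PosForm → PosForm → Prop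
  | refl (φ : PosForm) : PGL φ φ
  | trans : ∀ {φ ψ χ : PosForm}, PGL φ ψ → PGL ψ χ → PGL φ χ
  | or_inl (φ ψ : PosForm) : PGL φ (.or φ ψ)
  | or_inr (φ ψ : PosForm) : PGL ψ (.or φ ψ)
  | or_elim : ∀ {φ ψ χ : PosForm}, PGL φ χ → PGL ψ χ → PGL (.or φ ψ) χ
  | and_left (φ ψ : PosForm) : PGL (.and φ ψ) φ
  | and_right (φ ψ : PosForm) : PGL (.and φ ψ) ψ
  | and_intro : ∀ {φ ψ χ : PosForm}, PGL χ φ → PGL χ ψ → PGL χ (.and φ ψ)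
  | distrib (φ ψ χ : PosForm) :
      PGL (.and φ (.or ψ χ)) (.or (.and φ ψ) (.and φ χ))
  | dia_mono : ∀ {φ ψ : PosForm}, PGL φ ψ → PGL (.dia φ) (.dia ψ)
  | box_mono : ∀ {φ ψ : PosForm}, PGL φ ψ → PGL (.box φ) (.box ψ)
  | dia_or (φ ψ : PosForm) : PGL (.dia (.or φ ψ)) (.or (.dia φ) (.dia ψ))
  | box_and (φ ψ : PosForm) : PGL (.and (.box φ) (.box ψ)) (.box (.and φ ψ))
  | dia_box (φ ψ : PosForm) : PGL (.and (.dia φ) (.box ψ)) (.dia (.and φ ψ))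
  | box_or (φ ψ : PosForm) : PGL (.box (.or φ ψ)) (.or (.box φ) (.dia ψ))
  | bot_le (φ : PosForm) : PGL .bot φ
  | le_top (φ : PosForm) : PGL φ .top
  | dia_bot : PGL (.dia .bot) .bot
  | box_top : PGL .top (.box .top)
  | dia_dia (φ : PosForm) : PGL (.dia (.dia φ)) (.dia φ)
  | box_box (φ : PosForm) : PGL (.box φ) (.box (.box φ))
  | gld_box : ∀ {φ ψ : PosForm},
      (∀ n : ℕ, PGL (.and ψ (PosForm.box^[n] .bot)) φ) → PGL ψ φ
  | gld_dia : ∀ {φ ψ : PosForm},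
      (∀ n : ℕ, PGL φ (.or ψ (PosForm.dia^[n] .top))) → PGL φ ψ

/-- Modal formulas, built from propositional variables and `⊥`, `⊤` by
`¬`, `∨`, `∧`, `⊃`, `◇`, `□`. -/
inductive Form : Type
  | var : ℕ → Form
  | bot : Form
  | top : Form
  | neg : Form → Form
  | or : Form → Form → Form
  | and : Form → Form → Form
  | imp : Form → Form → Form
  | dia : Form → Form
  | box : Form → Form

/-- Uniform substitution of formulas for variables. -/
def Form.subst (σ : ℕ → Form) : Form → Form
  | .var n => σ n
  | .bot => .bot
  | .top => .top
  | .neg φ => .neg (φ.subst σ)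
  | .or φ ψ => .or (φ.subst σ) (ψ.subst σ)
  | .and φ ψ => .and (φ.subst σ) (ψ.subst σ)
  | .imp φ ψ => .imp (φ.subst σ) (ψ.subst σ)
  | .dia φ => .dia (φ.subst σ)
  | .box φ => .box (φ.subst σ)

/-- A formula is propositional if it contains no modal operators. -/
def Form.IsProp : Form → Prop
  | .var _ => True
  | .bot => True
  | .top => True
  | .neg φ => φ.IsProp
  | .or φ ψ => φ.IsProp ∧ ψ.IsProp
  | .and φ ψ => φ.IsProp ∧ ψ.IsProp
  | .imp φ ψ => φ.IsProp ∧ ψ.IsProp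
  | .dia _ => False
  | .box _ => False

/-- Boolean evaluation of a formula (the value on modal subformulas is
irrelevant and set to `true`); used to express classical tautologies. -/
def Form.evalBool (v : ℕ → Bool) : Form → Bool
  | .var n => v n
  | .bot => false
  | .top => true
  | .neg φ => !(φ.evalBool v)
  | .or φ ψ => φ.evalBool v || ψ.evalBool v
  | .and φ ψ => φ.evalBool v && ψ.evalBool v
  | .imp φ ψ => !(φ.evalBool v) || ψ.evalBool v
  | .dia _ => true
  | .box _ => true

/-- The provability logic `GLProvable`: the least normal modal logic containing `K`
and the Löb formula, with `◇` defined by `◇p ≡ ¬□¬p`, closed under modus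
ponens, uniform substitution and necessitation. -/
inductive GLProvable : Form → Prop
  | taut : ∀ {φ : Form}, φ.IsProp →
      (∀ v : ℕ → Bool, φ.evalBool v = true) → GLProvable φ
  | axK (φ ψ : Form) :
      GLProvable (.imp (.box (.imp φ ψ)) (.imp (.box φ) (.box ψ)))
  | loeb (φ : Form) : GLProvable (.imp (.box (.imp (.box φ) φ)) (.box φ))
  | diaDef₁ (φ : Form) : GLProvable (.imp (.dia φ) (.neg (.box (.neg φ))))
  | diaDef₂ (φ : Form) : GLProvable (.imp (.neg (.box (.neg φ))) (.dia φ))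
  | mp : ∀ {φ ψ : Form}, GLProvable (.imp φ ψ) → GLProvable φ → GLProvable ψ
  | subst : ∀ {φ : Form}, ∀ σ : ℕ → Form, GLProvable φ → GLProvable (φ.subst σ)
  | nec : ∀ {φ : Form}, GLProvable φ → GLProvable (.box φ)

/-- The inclusion of positive modal formulas into modal formulas. -/
def PosForm.toForm : PosForm → Form
  | .var n => .var n
  | .bot => .bot
  | .top => .top
  | .or φ ψ => .or φ.toForm ψ.toForm
  | .and φ ψ => .and φ.toForm ψ.toForm
  | .dia φ => .dia φ.toForm
  | .box φ => .box φ.toForm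

/-! ### Prime filters -/

/-- A preorder on `X` with operations making its quotient a bounded distributive lattice. -/
structure DLat (X : Type) where
  le : X → X → Prop
  and : X → X → X
  or : X → X → X
  bot : X
  top : X
  refl : ∀ a, le a a
  trans : ∀ {a b c}, le a b → le b c → le a c
  inl : ∀ a b, le a (or a b)
  inr : ∀ a b, le b (or a b)
  elim : ∀ {a b c}, le a c → le b c → le (or a b) c
  left : ∀ a b, le (and a b) a
  right : ∀ a b, le (and a b) b
  intro : ∀ {a b c}, le c a → le c b → le c (and a b)
  distrib : ∀ a b c, le (and a (or b c)) (or (and a b) (and a c))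
  bot_le : ∀ a, le bot a
  le_top : ∀ a, le a top

namespace DLat

variable {X : Type} (L : DLat X)

/-- Filters of `L`, possibly improper. -/
structure IsFilter (F : Set X) : Prop where
  up : ∀ {a b}, L.le a b → a ∈ F → b ∈ F
  inf : ∀ {a b}, a ∈ F → b ∈ F → L.and a b ∈ F
  top : L.top ∈ F

/-- Ideals of `L`, possibly improper. -/
structure IsIdl (I : Set X) : Prop where
  down : ∀ {a b}, L.le a b → b ∈ I → a ∈ I
  sup : ∀ {a b}, a ∈ I → b ∈ I → L.or a b ∈ I
  bot : L.bot ∈ I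

/-- Proper prime filters of `L`. -/
structure IsPrime (F : Set X) : Prop extends L.IsFilter F where
  bot : L.bot ∉ F
  or_mem : ∀ {a b}, L.or a b ∈ F → a ∈ F ∨ b ∈ F

variable {L}

theorem and_mono {a b c d : X} (h : L.le a c) (h' : L.le b d) :
    L.le (L.and a b) (L.and c d) :=
  L.intro (L.trans (L.left _ _) h) (L.trans (L.right _ _) h')

theorem isFilter_principal (a : X) : L.IsFilter {x | L.le a x} where
  up h h' := L.trans h' h
  inf h h' := L.intro h h'
  top := L.le_top _

theorem isIdl_principal (a : X) : L.IsIdl {x | L.le x a} where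
  down h h' := L.trans h h'
  sup h h' := L.elim h h'
  bot := L.bot_le _

/-- The filter generated by a filter and one more element. -/
theorem IsFilter.adjoin {F : Set X} (hF : L.IsFilter F) (a : X) :
    L.IsFilter {x | ∃ m ∈ F, L.le (L.and m a) x} where
  up := by
    rintro x y h ⟨m, hm, h'⟩
    exact ⟨m, hm, L.trans h' h⟩
  inf := by
    rintro x y ⟨m, hm, h⟩ ⟨m', hm', h'⟩
    exact ⟨L.and m m', hF.inf hm hm',
      L.intro (L.trans (and_mono (L.left _ _) (L.refl _)) h)
        (L.trans (and_mono (L.right _ _) (L.refl _)) h')⟩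
  top := ⟨L.top, hF.top, L.le_top _⟩

/-- The prime filter theorem. -/
theorem exists_prime {F I : Set X} (hF : L.IsFilter F) (hI : L.IsIdl I)
    (hd : ∀ x ∈ F, x ∉ I) : ∃ P, L.IsPrime P ∧ F ⊆ P ∧ ∀ x ∈ P, x ∉ I := by
  obtain ⟨M, hFM, hM⟩ := zorn_subset_nonempty
    {G : Set X | L.IsFilter G ∧ ∀ x ∈ G, x ∉ I} (by
      intro c hc hch hne
      refine ⟨⋃₀ c, ⟨⟨?_, ?_, ?_⟩, ?_⟩, fun s hs => Set.subset_sUnion_of_mem hs⟩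
      · rintro a b h ⟨s, hs, ha⟩
        exact ⟨s, hs, (hc hs).1.up h ha⟩
      · rintro a b ⟨s, hs, ha⟩ ⟨t, ht, hb⟩
        rcases hch.total hs ht with h | h
        · exact ⟨t, ht, (hc ht).1.inf (h ha) hb⟩
        · exact ⟨s, hs, (hc hs).1.inf ha (h hb)⟩
      · obtain ⟨s, hs⟩ := hne
        exact ⟨s, hs, (hc hs).1.top⟩
      · rintro x ⟨s, hs, hx⟩
        exact (hc hs).2 x hx) F ⟨hF, hd⟩
  have hMf := hM.prop.1
  -- By maximality, adjoining an element outside `M` makes the filter meet `I`.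
  have key : ∀ a, a ∉ M → ∃ m ∈ M, ∃ i ∈ I, L.le (L.and m a) i := by
    intro a ha
    by_contra hcon
    have hmem : {x | ∃ m ∈ M, L.le (L.and m a) x} ∈
        {G : Set X | L.IsFilter G ∧ ∀ x ∈ G, x ∉ I} := by
      refine ⟨hMf.adjoin a, ?_⟩
      rintro x ⟨m, hm, h⟩ hx
      exact hcon ⟨m, hm, x, hx, h⟩
    have hsub := hM.le_of_ge hmem (fun x hx => ⟨x, hx, L.left _ _⟩)
    exact ha (hsub ⟨L.top, hMf.top, L.right _ _⟩)
  refine ⟨M, ⟨hMf, fun h => hM.prop.2 _ h hI.bot, ?_⟩, hFM, hM.prop.2⟩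
  intro a b hab
  by_contra hcon
  rw [not_or] at hcon
  obtain ⟨m, hm, i, hi, h⟩ := key a hcon.1
  obtain ⟨m', hm', i', hi', h'⟩ := key b hcon.2
  refine hM.prop.2 _ (hMf.up ?_ (hMf.inf (hMf.inf hm hm') hab)) (hI.sup hi hi')
  refine L.trans (L.distrib _ _ _) (L.elim ?_ ?_)
  · exact L.trans (L.trans (and_mono (L.left _ _) (L.refl _)) h) (L.inl _ _)
  · exact L.trans (L.trans (and_mono (L.right _ _) (L.refl _)) h') (L.inr _ _)

variable {P : Set X}

theorem IsPrime.mem_or (hP : L.IsPrime P) {a b : X} : L.or a b ∈ P ↔ a ∈ P ∨ b ∈ P :=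
  ⟨hP.or_mem, fun h => h.elim (hP.up (L.inl _ _)) (hP.up (L.inr _ _))⟩

theorem IsPrime.mem_and (hP : L.IsPrime P) {a b : X} : L.and a b ∈ P ↔ a ∈ P ∧ b ∈ P :=
  ⟨fun h => ⟨hP.up (L.left _ _) h, hP.up (L.right _ _) h⟩, fun h => hP.inf h.1 h.2⟩

end DLat

/-! ### Kripke semantics and soundness -/

/-- Truth of a modal formula at a world of a Kripke model. -/
def Form.Sat {W : Type} (R : W → W → Prop) (V : ℕ → W → Prop) : Form → W → Prop
  | .var n, w => V n w
  | .bot, _ => False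
  | .top, _ => True
  | .neg φ, w => ¬ φ.Sat R V w
  | .or φ ψ, w => φ.Sat R V w ∨ ψ.Sat R V w
  | .and φ ψ, w => φ.Sat R V w ∧ ψ.Sat R V w
  | .imp φ ψ, w => φ.Sat R V w → ψ.Sat R V w
  | .dia φ, w => ∃ v, R w v ∧ φ.Sat R V v
  | .box φ, w => ∀ v, R w v → φ.Sat R V v

/-- Transitive frames with a rank function into `ℕ` strictly decreasing along `R`. -/
structure Ranked {W : Type} (R : W → W → Prop) (rk : W → ℕ) : Prop where
  trans : ∀ {u v w}, R u v → R v w → R u w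
  lt : ∀ {u v}, R u v → rk v < rk u

theorem Form.sat_subst {W : Type} (R : W → W → Prop) (V : ℕ → W → Prop) (σ : ℕ → Form)
    (φ : Form) (w : W) :
    (φ.subst σ).Sat R V w ↔ φ.Sat R (fun n => (σ n).Sat R V) w := by
  induction φ generalizing w <;> simp_all [Form.subst, Form.Sat]

open Classical in
theorem Form.sat_of_isProp {W : Type} (R : W → W → Prop) (V : ℕ → W → Prop) (w : W) (φ : Form)
    (h : φ.IsProp) : φ.Sat R V w ↔ φ.evalBool (fun n => decide (V n w)) = true := by
  induction φ with
  | imp a b iha ihb =>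
    simp only [Form.Sat, Form.evalBool, iha h.1, ihb h.2]
    cases a.evalBool _ <;> simp
  | _ => simp_all [Form.IsProp, Form.Sat, Form.evalBool]

theorem GLProvable.sound {φ : Form} (h : GLProvable φ) {W : Type} {R : W → W → Prop}
    {rk : W → ℕ} (hR : Ranked R rk) (V : ℕ → W → Prop) (w : W) : φ.Sat R V w := by
  classical
  induction h generalizing V w with
  | taut hp ht => exact (Form.sat_of_isProp R V w _ hp).2 (ht _)
  | axK a b => exact fun h h' v hv => h v hv (h' v hv)
  | loeb a =>
    intro h
    have key : ∀ n v, rk v < n → R w v → a.Sat R V v := by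
      intro n
      induction n with
      | zero => intro v hv; omega
      | succ n ih =>
        intro v hn hv
        refine h v hv fun u hu => ih u ?_ (hR.trans hv hu)
        have := hR.lt hu
        omega
    exact fun v hv => key _ v (Nat.lt_succ_self _) hv
  | diaDef₁ a => exact fun ⟨v, hv, h⟩ h' => h' v hv h
  | diaDef₂ a =>
    intro h
    by_contra hc
    exact h fun v hv hs => hc ⟨v, hv, hs⟩
  | mp _ _ ih ih' => exact ih V w (ih' V w)
  | subst σ _ ih => exact (Form.sat_subst R V σ _ w).2 (ih _ w)
  | nec _ ih => exact fun v _ => ih V v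

theorem sat_box_iter {W : Type} {R : W → W → Prop} {rk : W → ℕ} (hR : Ranked R rk)
    (V : ℕ → W → Prop) (n : ℕ) (w : W) (h : rk w < n) :
    (PosForm.box^[n] .bot).toForm.Sat R V w := by
  induction n generalizing w with
  | zero => omega
  | succ n ih =>
    rw [Function.iterate_succ_apply']
    intro v hv
    have := hR.lt hv
    exact ih v (by omega)

theorem not_sat_dia_iter {W : Type} {R : W → W → Prop} {rk : W → ℕ} (hR : Ranked R rk)
    (V : ℕ → W → Prop) (n : ℕ) (w : W) (h : rk w < n) :
    ¬ (PosForm.dia^[n] .top).toForm.Sat R V w := by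
  induction n generalizing w with
  | zero => omega
  | succ n ih =>
    rw [Function.iterate_succ_apply']
    rintro ⟨v, hv, hs⟩
    have := hR.lt hv
    exact ih v (by omega) hs

theorem PGL.sound {φ ψ : PosForm} (h : PGL φ ψ) {W : Type} {R : W → W → Prop}
    {rk : W → ℕ} (hR : Ranked R rk) (V : ℕ → W → Prop) (w : W) :
    φ.toForm.Sat R V w → ψ.toForm.Sat R V w := by
  induction h generalizing w with
  | refl => exact id
  | trans _ _ ih ih' => exact fun h => ih' w (ih w h)
  | or_inl => exact Or.inl
  | or_inr => exact Or.inr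
  | or_elim _ _ ih ih' => exact fun h => h.elim (ih w) (ih' w)
  | and_left => exact And.left
  | and_right => exact And.right
  | and_intro _ _ ih ih' => exact fun h => ⟨ih w h, ih' w h⟩
  | distrib => exact fun ⟨h, h'⟩ => h'.imp (fun x => ⟨h, x⟩) (fun x => ⟨h, x⟩)
  | dia_mono _ ih => exact fun ⟨v, hv, h⟩ => ⟨v, hv, ih v h⟩
  | box_mono _ ih => exact fun h v hv => ih v (h v hv)
  | dia_or => exact fun ⟨v, hv, h⟩ => h.imp (fun x => ⟨v, hv, x⟩) (fun x => ⟨v, hv, x⟩)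
  | box_and => exact fun ⟨h, h'⟩ v hv => ⟨h v hv, h' v hv⟩
  | dia_box => exact fun ⟨⟨v, hv, h⟩, h'⟩ => ⟨v, hv, h, h' v hv⟩
  | box_or a b =>
    intro h
    by_contra hc
    have hc := not_or.1 hc
    exact hc.1 fun v hv => (h v hv).resolve_right fun hb => hc.2 ⟨v, hv, hb⟩
  | bot_le => exact False.elim
  | le_top => exact fun _ => trivial
  | dia_bot => exact fun ⟨_, _, h⟩ => h
  | box_top => exact fun _ _ _ => trivial
  | dia_dia => exact fun ⟨_, hv, u, hu, h⟩ => ⟨u, hR.trans hv hu, h⟩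
  | box_box => exact fun h v hv u hu => h u (hR.trans hv hu)
  | gld_box _ ih =>
    exact fun h => ih (rk w + 1) w ⟨h, sat_box_iter hR V _ w (Nat.lt_succ_self _)⟩
  | gld_dia _ ih =>
    exact fun h => (ih (rk w + 1) w h).resolve_right
      (not_sat_dia_iter hR V _ w (Nat.lt_succ_self _))

/-! ### Completeness of `PGL⁺` -/

/-- Positive formulas preordered by derivability in `PGL⁺`. -/
def pglLat : DLat PosForm where
  le := PGL
  and := .and
  or := .or
  bot := .bot
  top := .top
  refl := .refl
  trans := .trans
  inl := .or_inl
  inr := .or_inr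
  elim := .or_elim
  left := .and_left
  right := .and_right
  intro := .and_intro
  distrib := .distrib
  bot_le := .bot_le
  le_top := .le_top

/-- Worlds of the canonical model of `PGL⁺`: prime filters of bounded height. -/
abbrev PWorld : Type := {P : Set PosForm // pglLat.IsPrime P ∧ ∃ n : ℕ, PosForm.box^[n] .bot ∈ P}

namespace PWorld

/-- The canonical relation `□⁻¹w ⊆ v ⊆ ◇⁻¹w`. -/
def R (w v : PWorld) : Prop :=
  (∀ a, PosForm.box a ∈ w.1 → a ∈ v.1) ∧ ∀ a ∈ v.1, PosForm.dia a ∈ w.1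

open Classical in
/-- The least `n` with `□ⁿ⊥` in the world. -/
noncomputable def rank (w : PWorld) : ℕ := Nat.find w.2.2

theorem ranked : Ranked R rank where
  trans {u v w} h h' :=
    ⟨fun a ha => h'.1 a (h.1 _ (u.2.1.up (PGL.box_box a) ha)),
      fun a ha => u.2.1.up (PGL.dia_dia a) (h.2 _ (h'.2 a ha))⟩
  lt {u v} h := by
    classical
    have hu : PosForm.box^[rank u] .bot ∈ u.1 := Nat.find_spec u.2.2
    rcases hn : rank u with _ | n
    · rw [hn] at hu
      exact (u.2.1.bot hu).elim
    · rw [hn, Function.iterate_succ_apply'] at hu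
      exact Nat.lt_succ_of_le (Nat.find_min' v.2.2 (h.1 _ hu))

/-- `□⁻¹w` is a filter. -/
theorem isFilter_box (w : PWorld) : pglLat.IsFilter {a | PosForm.box a ∈ w.1} where
  up h ha := w.2.1.up (PGL.box_mono h) ha
  inf ha hb := w.2.1.up (PGL.box_and _ _) (w.2.1.inf ha hb)
  top := w.2.1.up PGL.box_top w.2.1.top

/-- The complement of `◇⁻¹w` is an ideal. -/
theorem isIdl_dia (w : PWorld) : pglLat.IsIdl {a | PosForm.dia a ∉ w.1} where
  down h hb ha := hb (w.2.1.up (PGL.dia_mono h) ha)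
  sup ha hb h := (w.2.1.or_mem (w.2.1.up (PGL.dia_or _ _) h)).elim ha hb
  bot h := w.2.1.bot (w.2.1.up PGL.dia_bot h)

/-- A prime filter separating `□⁻¹w` from the complement of `◇⁻¹w` is a successor of `w`; its
height is bounded since that of `w` is. -/
theorem exists_succ (w : PWorld) {F I : Set PosForm} (hF : pglLat.IsFilter F)
    (hI : pglLat.IsIdl I) (hd : ∀ x ∈ F, x ∉ I) (hwF : ∀ a, PosForm.box a ∈ w.1 → a ∈ F)
    (hwI : ∀ a, PosForm.dia a ∉ w.1 → a ∈ I) :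
    ∃ v : PWorld, R w v ∧ F ⊆ v.1 ∧ ∀ x ∈ v.1, x ∉ I := by
  obtain ⟨P, hP, hFP, hPI⟩ := DLat.exists_prime hF hI hd
  obtain ⟨n, hn⟩ := w.2.2
  have hbd : PosForm.box^[n] .bot ∈ P := by
    apply hFP
    apply hwF
    rw [← Function.iterate_succ_apply' PosForm.box, Function.iterate_succ_apply]
    -- `□ⁿ⊥ ⊢ □ⁿ□⊥` by monotonicity.
    refine w.2.1.up ?_ hn
    clear hn
    induction n with
    | zero => exact PGL.bot_le _
    | succ n ih =>
      rw [Function.iterate_succ_apply', Function.iterate_succ_apply']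
      exact PGL.box_mono ih
  exact ⟨⟨P, hP, n, hbd⟩, ⟨fun a ha => hFP (hwF a ha), fun a ha => by
    by_contra hc
    exact hPI a ha (hwI a hc)⟩, hFP, hPI⟩

theorem exists_of_dia {w : PWorld} {a : PosForm} (ha : PosForm.dia a ∈ w.1) :
    ∃ v, R w v ∧ a ∈ v.1 := by
  obtain ⟨v, hv, hF, -⟩ := w.exists_succ (w.isFilter_box.adjoin a) w.isIdl_dia (by
    rintro x ⟨m, hm, h⟩ hx
    exact hx (w.2.1.up (PGL.trans (PGL.and_intro
      (PGL.and_right _ _) (PGL.and_left _ _))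
        (PGL.trans (PGL.dia_box _ _) (PGL.dia_mono
          (PGL.trans (PGL.and_intro (PGL.and_right _ _) (PGL.and_left _ _)) h))))
      (w.2.1.inf hm ha))) (fun x hx => ⟨x, hx, PGL.and_left _ _⟩) (fun _ h => h)
  exact ⟨v, hv, hF ⟨.top, w.isFilter_box.top, PGL.and_right _ _⟩⟩

theorem exists_of_not_box {w : PWorld} {a : PosForm} (ha : PosForm.box a ∉ w.1) :
    ∃ v, R w v ∧ a ∉ v.1 := by
  have hI : pglLat.IsIdl {x | ∃ b, PosForm.dia b ∉ w.1 ∧ PGL x (.or a b)} :=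
    { down := by
        rintro x y h ⟨b, hb, h'⟩
        exact ⟨b, hb, PGL.trans h h'⟩
      sup := by
        rintro x y ⟨b, hb, h⟩ ⟨c, hc, h'⟩
        refine ⟨.or b c, w.isIdl_dia.sup hb hc, PGL.or_elim ?_ ?_⟩
        · exact PGL.trans h (PGL.or_elim (PGL.or_inl _ _)
            (PGL.trans (PGL.or_inl _ _) (PGL.or_inr _ _)))
        · exact PGL.trans h' (PGL.or_elim (PGL.or_inl _ _)
            (PGL.trans (PGL.or_inr _ _) (PGL.or_inr _ _)))
      bot := ⟨.bot, w.isIdl_dia.bot, PGL.bot_le _⟩ }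
  obtain ⟨v, hv, -, hvI⟩ := w.exists_succ w.isFilter_box hI (by
    rintro x hx ⟨b, hb, h⟩
    exact (w.2.1.or_mem (w.2.1.up (PGL.trans (PGL.box_mono h) (PGL.box_or _ _)) hx)).elim ha hb)
    (fun _ h => h) (fun b hb => ⟨b, hb, PGL.or_inr _ _⟩)
  exact ⟨v, hv, fun h => hvI a h ⟨.bot, w.isIdl_dia.bot, PGL.or_inl _ _⟩⟩

theorem truth (φ : PosForm) (w : PWorld) :
    φ.toForm.Sat R (fun n v => PosForm.var n ∈ v.1) w ↔ φ ∈ w.1 := by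
  induction φ generalizing w with
  | var n => exact Iff.rfl
  | bot => exact ⟨False.elim, w.2.1.bot⟩
  | top => exact ⟨fun _ => w.2.1.top, fun _ => trivial⟩
  | or a b iha ihb => exact (or_congr (iha w) (ihb w)).trans w.2.1.mem_or.symm
  | and a b iha ihb => exact (and_congr (iha w) (ihb w)).trans w.2.1.mem_and.symm
  | dia a ih =>
    constructor
    · rintro ⟨v, hv, h⟩
      exact hv.2 a ((ih v).1 h)
    · intro h
      obtain ⟨v, hv, h'⟩ := exists_of_dia h
      exact ⟨v, hv, (ih v).2 h'⟩
  | box a ih =>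
    constructor
    · intro h
      by_contra hc
      obtain ⟨v, hv, h'⟩ := exists_of_not_box hc
      exact h' ((ih v).1 (h v hv))
    · exact fun h v hv => (ih v).2 (hv.1 a h)

end PWorld

theorem PGL.complete {φ ψ : PosForm}
    (h : ∀ (W : Type) (R : W → W → Prop) (rk : W → ℕ), Ranked R rk →
      ∀ (V : ℕ → W → Prop) (w : W), φ.toForm.Sat R V w → ψ.toForm.Sat R V w) : PGL φ ψ := by
  refine PGL.gld_box fun n => ?_
  by_contra hc
  obtain ⟨P, hP, hF, hI⟩ := DLat.exists_prime
    (pglLat.isFilter_principal (.and φ (PosForm.box^[n] .bot)))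
    (pglLat.isIdl_principal ψ) (fun x hx hx' => hc (PGL.trans hx hx'))
  let w : PWorld := ⟨P, hP, n, hF (PGL.and_right _ _)⟩
  exact hI ψ ((PWorld.truth ψ w).1 (h _ _ _ PWorld.ranked _ w
    ((PWorld.truth φ w).2 (hF (PGL.and_left _ _))))) (PGL.refl ψ)

/-! ### Completeness of `GL` -/

namespace GLProvable

/-- Substitution instances of tautologies in the three variables `0`, `1`, `2`. -/
theorem inst (T : Form) (a b c : Form) (hT : T.IsProp) (h : ∀ v, T.evalBool v = true) :
    GLProvable (T.subst fun n => if n = 0 then a else if n = 1 then b else c) :=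
  .subst _ (.taut hT h)

local notation "p" => Form.var 0
local notation "q" => Form.var 1
local notation "r" => Form.var 2
local infixr:60 " ⇒ " => Form.imp

theorem imp_self (a : Form) : GLProvable (a ⇒ a) :=
  inst (p ⇒ p) a a a (by simp [Form.IsProp]) (by intro v; simp [Form.evalBool])

theorem imp_trans {a b c : Form} (h : GLProvable (a ⇒ b)) (h' : GLProvable (b ⇒ c)) :
    GLProvable (a ⇒ c) :=
  .mp (.mp (inst ((p ⇒ q) ⇒ (q ⇒ r) ⇒ p ⇒ r) a b c (by simp [Form.IsProp])
    (by intro v; simp only [Form.evalBool]; grind)) h) h'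

theorem or_elim {a b c : Form} (h : GLProvable (a ⇒ c)) (h' : GLProvable (b ⇒ c)) :
    GLProvable (.or a b ⇒ c) :=
  .mp (.mp (inst ((p ⇒ r) ⇒ (q ⇒ r) ⇒ .or p q ⇒ r) a b c (by simp [Form.IsProp])
    (by intro v; simp only [Form.evalBool]; grind)) h) h'

theorem and_intro {a b c : Form} (h : GLProvable (c ⇒ a)) (h' : GLProvable (c ⇒ b)) :
    GLProvable (c ⇒ .and a b) :=
  .mp (.mp (inst ((r ⇒ p) ⇒ (r ⇒ q) ⇒ r ⇒ .and p q) a b c (by simp [Form.IsProp])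
    (by intro v; simp only [Form.evalBool]; grind)) h) h'

theorem curry {a b c : Form} (h : GLProvable (.and a b ⇒ c)) : GLProvable (a ⇒ b ⇒ c) :=
  .mp (inst ((.and p q ⇒ r) ⇒ p ⇒ q ⇒ r) a b c (by simp [Form.IsProp])
    (by intro v; simp only [Form.evalBool]; grind)) h

theorem uncurry {a b c : Form} (h : GLProvable (a ⇒ b ⇒ c)) : GLProvable (.and a b ⇒ c) :=
  .mp (inst ((p ⇒ q ⇒ r) ⇒ .and p q ⇒ r) a b c (by simp [Form.IsProp])
    (by intro v; simp only [Form.evalBool]; grind)) h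

theorem and_left (a b : Form) : GLProvable (.and a b ⇒ a) :=
  inst (.and p q ⇒ p) a b b (by simp [Form.IsProp])
    (by intro v; simp only [Form.evalBool]; grind)

theorem and_right (a b : Form) : GLProvable (.and a b ⇒ b) :=
  inst (.and p q ⇒ q) a b b (by simp [Form.IsProp])
    (by intro v; simp only [Form.evalBool]; grind)

theorem top_intro (a : Form) : GLProvable (a ⇒ .top) :=
  inst (p ⇒ .top) a a a (by simp [Form.IsProp]) (by intro v; simp [Form.evalBool])

theorem weaken {a b : Form} (h : GLProvable b) : GLProvable (a ⇒ b) :=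
  .mp (inst (q ⇒ p ⇒ q) a b b (by simp [Form.IsProp])
    (by intro v; simp only [Form.evalBool]; grind)) h

/-- Formulas preordered by provable implication in `GL`. -/
def lat : DLat Form where
  le a b := GLProvable (a ⇒ b)
  and := .and
  or := .or
  bot := .bot
  top := .top
  refl := imp_self
  trans := imp_trans
  inl a b := inst (p ⇒ .or p q) a b b (by simp [Form.IsProp])
    (by intro v; simp only [Form.evalBool]; grind)
  inr a b := inst (q ⇒ .or p q) a b b (by simp [Form.IsProp])
    (by intro v; simp only [Form.evalBool]; grind)
  elim := or_elim
  left := and_left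
  right := and_right
  intro := and_intro
  distrib a b c := inst (.and p (.or q r) ⇒ .or (.and p q) (.and p r)) a b c
    (by simp [Form.IsProp]) (by intro v; simp only [Form.evalBool]; grind)
  bot_le a := inst (.bot ⇒ p) a a a (by simp [Form.IsProp])
    (by intro v; simp [Form.evalBool])
  le_top := top_intro

theorem box_mono {a b : Form} (h : GLProvable (a ⇒ b)) : GLProvable (.box a ⇒ .box b) :=
  .mp (.axK _ _) (.nec h)

theorem box_and (a b : Form) : GLProvable (.and (.box a) (.box b) ⇒ .box (.and a b)) :=
  uncurry (imp_trans (box_mono (curry (imp_self _))) (.axK _ _))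

/-- Transitivity, derived from Löb's axiom applied to `a ∧ □a`. -/
theorem box_box (a : Form) : GLProvable (.box a ⇒ .box (.box a)) := by
  have h : GLProvable (a ⇒ .box (.and a (.box a)) ⇒ .and a (.box a)) :=
    curry (and_intro (and_left _ _) (imp_trans (and_right _ _) (box_mono (and_left _ _))))
  exact imp_trans (imp_trans (box_mono h) (.loeb _)) (box_mono (and_right _ _))

/-- Worlds of the canonical model of `GL`: maximal consistent sets. -/
abbrev World : Type := {P : Set Form // lat.IsPrime P}

namespace World

variable (w : World)

theorem mem_neg {a : Form} : Form.neg a ∈ w.1 ↔ a ∉ w.1 := by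
  constructor
  · intro h h'
    exact w.2.bot (w.2.up (inst (.and p (.neg p) ⇒ .bot) a a a (by simp [Form.IsProp])
      (by intro v; simp only [Form.evalBool]; grind)) (w.2.inf h' h))
  · intro h
    refine (w.2.or_mem (a := a) (w.2.up (inst (.top ⇒ .or p (.neg p)) a a a
      (by simp [Form.IsProp]) (by intro v; simp only [Form.evalBool]; grind)) w.2.top)).resolve_left h

theorem mem_imp {a b : Form} : (a ⇒ b) ∈ w.1 ↔ (a ∈ w.1 → b ∈ w.1) := by
  constructor
  · exact fun h h' => w.2.up (uncurry (imp_self _)) (w.2.inf h h')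
  · intro h
    by_cases ha : a ∈ w.1
    · exact w.2.up (inst (q ⇒ p ⇒ q) a b b (by simp [Form.IsProp])
        (by intro v; simp only [Form.evalBool]; grind)) (h ha)
    · exact w.2.up (inst (.neg p ⇒ p ⇒ q) a b b (by simp [Form.IsProp])
        (by intro v; simp only [Form.evalBool]; grind)) (w.mem_neg.2 ha)

theorem mem_dia {a : Form} : Form.dia a ∈ w.1 ↔ Form.box (.neg a) ∉ w.1 := by
  rw [← mem_neg]
  exact ⟨w.2.up (.diaDef₁ a), w.2.up (.diaDef₂ a)⟩

/-- The canonical relation of `GL` relative to a set `S` of bodies of boxed formulas. The second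
clause makes the set of boxed formulas from `S` grow strictly. -/
def R (S : Set Form) (w v : World) : Prop :=
  (∀ a ∈ S, Form.box a ∈ w.1 → a ∈ v.1 ∧ Form.box a ∈ v.1) ∧
    ∃ a ∈ S, Form.box a ∈ v.1 ∧ Form.box a ∉ w.1

theorem ranked {S : Set Form} (hS : S.Finite) :
    Ranked (R S) (fun w => {a ∈ S | Form.box a ∉ w.1}.ncard) where
  trans {u v w} h h' := by
    refine ⟨fun a ha hu => h'.1 a ha (h.1 a ha hu).2, ?_⟩
    obtain ⟨a, ha, hv, hu⟩ := h.2
    exact ⟨a, ha, (h'.1 a ha hv).2, hu⟩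
  lt {u v} h := by
    refine Set.ncard_lt_ncard ?_ (hS.subset (Set.sep_subset _ _))
    obtain ⟨a, ha, hv, hu⟩ := h.2
    refine ⟨fun b hb => ⟨hb.1, fun hb' => hb.2 (h.1 b hb.1 hb').2⟩, fun hsub => ?_⟩
    exact (hsub (a := a) ⟨ha, hu⟩).2 hv

/-- If `□a ∉ w`, then Löb's axiom makes `{b, □b | □b ∈ w} ∪ {□a, ¬a}` consistent. -/
theorem exists_of_not_box {S : Set Form} {a : Form} (haS : a ∈ S) (ha : Form.box a ∉ w.1) :
    ∃ v, R S w v ∧ a ∉ v.1 := by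
  have hF : lat.IsFilter {x | ∃ b, Form.box b ∈ w.1 ∧ GLProvable (.and b (.box b) ⇒ x)} :=
    { up := by
        rintro x y h ⟨b, hb, h'⟩
        exact ⟨b, hb, imp_trans h' h⟩
      inf := by
        rintro x y ⟨b, hb, h⟩ ⟨c, hc, h'⟩
        refine ⟨.and b c, w.2.up (box_and b c) (w.2.inf hb hc), and_intro ?_ ?_⟩
        · exact imp_trans (lat.and_mono (and_left _ _) (box_mono (and_left _ _))) h
        · exact imp_trans (lat.and_mono (and_right _ _) (box_mono (and_right _ _))) h'
      top := ⟨.top, w.2.up (weaken (.nec (.mp (top_intro _) (imp_self p)))) w.2.top,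
        top_intro _⟩ }
  obtain ⟨P, hP, hFP, hPI⟩ := DLat.exists_prime (hF.adjoin (.box a)) (lat.isIdl_principal a) (by
    rintro x ⟨m, ⟨b, hb, h⟩, h'⟩ hx
    have h₁ : GLProvable (.and b (.box b) ⇒ .box a ⇒ a) :=
      imp_trans h (curry (imp_trans h' hx))
    have h₂ : GLProvable (.box b ⇒ .box a) :=
      imp_trans (imp_trans (imp_trans (and_intro (imp_self _) (box_box b)) (box_and _ _))
        (box_mono h₁)) (.loeb a)
    exact ha (w.2.up h₂ hb))
  have hsub : ∀ b, Form.box b ∈ w.1 → b ∈ P ∧ Form.box b ∈ P := fun b hb =>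
    ⟨hFP ⟨b, ⟨b, hb, and_left _ _⟩, and_left _ _⟩,
      hFP ⟨.box b, ⟨b, hb, and_right _ _⟩, and_left _ _⟩⟩
  exact ⟨⟨P, hP⟩, ⟨fun b _ hb => hsub b hb, a, haS, hFP ⟨.top, hF.top, and_right _ _⟩, ha⟩,
    fun h => hPI a h (imp_self a)⟩

end World

/-- The bodies of boxed subformulas, reading `◇χ` as `¬□¬χ`. -/
def bodies : Form → Set Form
  | .var _ => ∅
  | .bot => ∅
  | .top => ∅
  | .neg a => bodies a
  | .or a b => bodies a ∪ bodies b
  | .and a b => bodies a ∪ bodies b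
  | .imp a b => bodies a ∪ bodies b
  | .dia a => insert (.neg a) (bodies a)
  | .box a => insert a (bodies a)

theorem bodies_finite (φ : Form) : (bodies φ).Finite := by
  induction φ <;> simp_all [bodies]

theorem truth {S : Set Form} (φ : Form) (hφ : bodies φ ⊆ S) (w : World) :
    φ.Sat (World.R S) (fun n v => Form.var n ∈ v.1) w ↔ φ ∈ w.1 := by
  induction φ generalizing w with
  | var n => exact Iff.rfl
  | bot => exact ⟨False.elim, w.2.bot⟩
  | top => exact ⟨fun _ => w.2.top, fun _ => trivial⟩
  | neg a ih => exact (not_congr (ih hφ w)).trans w.mem_neg.symm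
  | or a b iha ihb =>
    have h := Set.union_subset_iff.1 hφ
    exact (or_congr (iha h.1 w) (ihb h.2 w)).trans w.2.mem_or.symm
  | and a b iha ihb =>
    have h := Set.union_subset_iff.1 hφ
    exact (and_congr (iha h.1 w) (ihb h.2 w)).trans w.2.mem_and.symm
  | imp a b iha ihb =>
    have h := Set.union_subset_iff.1 hφ
    exact (imp_congr (iha h.1 w) (ihb h.2 w)).trans w.mem_imp.symm
  | dia a ih =>
    have h := Set.insert_subset_iff.1 hφ
    rw [World.mem_dia]
    constructor
    · rintro ⟨v, hv, hs⟩ hb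
      exact v.mem_neg.1 (hv.1 _ h.1 hb).1 ((ih h.2 v).1 hs)
    · intro hb
      obtain ⟨v, hv, hn⟩ := w.exists_of_not_box h.1 hb
      refine ⟨v, hv, (ih h.2 v).2 ?_⟩
      by_contra hc
      exact hn (v.mem_neg.2 hc)
  | box a ih =>
    have h := Set.insert_subset_iff.1 hφ
    constructor
    · intro hs
      by_contra hb
      obtain ⟨v, hv, hn⟩ := w.exists_of_not_box h.1 hb
      exact hn ((ih h.2 v).1 (hs v hv))
    · exact fun hb v hv => (ih h.2 v).2 (hv.1 a h.1 hb).1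

theorem complete {φ : Form}
    (h : ∀ (W : Type) (R : W → W → Prop) (rk : W → ℕ), Ranked R rk →
      ∀ (V : ℕ → W → Prop) (w : W), φ.Sat R V w) : GLProvable φ := by
  by_contra hc
  obtain ⟨P, hP, -, hI⟩ := DLat.exists_prime (L := lat) (lat.isFilter_principal .top)
    (lat.isIdl_principal φ)
    (fun x hx hx' => hc (.mp (imp_trans hx hx') (.mp (top_intro _) (imp_self p))))
  exact hI φ ((truth φ subset_rfl ⟨P, hP⟩).1
    (h _ _ _ (World.ranked (bodies_finite φ)) _ _)) (imp_self φ)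

end GLProvable

/-- For positive modal formulas `φ` and `ψ`, the implication `φ ⊃ ψ` is a
theorem of `GL` iff the sequent `φ ⊢ ψ` is provable in `PGL⁺`. -/
theorem stmt14 (φ ψ : PosForm) :
    GLProvable (Form.imp φ.toForm ψ.toForm) ↔ PGL φ ψ :=
  ⟨fun h => PGL.complete fun _ _ _ hR V w => h.sound hR V w,
    fun h => GLProvable.complete fun _ _ _ hR V w => h.sound hR V w⟩
end
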